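/- There exists an absolute constant C > 0 such that the following holds. Let p be an odd prime, let g, h : 𝔽_p* → 𝔽_p* be arbitrary functions, define f(x,y) = g(x)(h(x)+y) on 𝔽_p* × 𝔽_p*, and set m = μ(g). Then for all nonempty finite subsets A, B, C ⊆ 𝔽_p* with |A|, |B|, |C| ≤ p^{5/8}, one has max{|f(A,B)|, |B+C|} ≥ C · min{ |A|^{1/5}|B|^{4/5}|C|^{1/5} / m^{4/5} , |B||C|^{1/2} / m , |B||A|^{1/2} / m , |B|^{2/3}|C|^{1/3}|A|^{1/3} / m^{2/3} }. -/

import Mathlib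

/-!
If `x = b + c` with `b ∈ B` and `c ∈ C`, then `f(a, b) = g(a) x + g(a) (h(a) - c)`. By
Cauchy–Schwarz over the values of `f`, it suffices to bound the number of pairs with
`m x' + b = m' x + b'` in a family of at most `N = |B + C| |A| |C|` triples `(x, m, b)`, `m ≠ 0`, by
a multiple of `N (√N + |B + C| + |A|)`. The relation says that two lines of affine 3-space, with
directions `(1, -x, x²)` on a conic, meet. Two deformations of the family over the rational
functions make the lines within each copy pairwise disjoint and turn the related pairs into
incidences between the copies.

The incidences are bounded by the polynomial method. Take a surface of degree less than `√N` through
a random sample of one copy; a line `q` that meets more sampled lines than the degree lies on it. On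
an irreducible surface of degree `d`, all but `O(d²)` of these lines either meet only `O(d)` sampled
lines or satisfy the following: at almost every point of `q` where a sampled line crosses, its `x`
is the second root of the quadratic for the conic directions tangent to the surface, and if `q` has
the first root `x₀`, then `1 / (x - x₀)` is a quotient of polynomials on `q` with vanishing second
derivative. In degree small compared with the characteristic this quotient is linear, so these lines
lie in one regulus, of which the family contains at most `|B + C| + |A|` lines. Hence few lines meet
many others. The degree condition needs `N ≤ p²`; if `N > p²`, the bounds
`|A|, |B|, |C| ≤ p^(5/8)` already bound the first term of the minimum by `|B + C|`.
-/

open Finset Pointwise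

/-- `mu g` is `max_{t ∈ 𝔽_p*} |{x ∈ 𝔽_p* : g x = t}|`. -/
def mu {p : ℕ} [NeZero p] (g : ZMod p → ZMod p) : ℕ :=
  Finset.sup (Finset.univ.filter fun t : ZMod p => t ≠ 0)
    (fun t => (Finset.univ.filter fun x : ZMod p => x ≠ 0 ∧ g x = t).card)

namespace PhamMojarrad

section PolynomialMethod

open MvPolynomial

/-! ### Polynomials of small degree in positive characteristic -/

section Wronskian

variable {K : Type*} [Field K] {p : ℕ} [CharP K p]

lemma natDegree_eq_zero_of_derivative_eq_zero {f : Polynomial K} (hf : f.natDegree < p)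
    (h : f.derivative = 0) : f.natDegree = 0 := by
  by_contra hne
  have hcoeff := congrArg (fun r => Polynomial.coeff r (f.natDegree - 1)) h
  simp only [Polynomial.coeff_derivative, Polynomial.coeff_zero] at hcoeff
  rw [Nat.sub_add_cancel (Nat.pos_of_ne_zero hne), ← Nat.cast_add_one,
    Nat.sub_add_cancel (Nat.pos_of_ne_zero hne), mul_eq_zero, CharP.cast_eq_zero_iff K p] at hcoeff
  rcases hcoeff with hlead | hdvd
  · exact hne (by rw [Polynomial.leadingCoeff_eq_zero.mp hlead, Polynomial.natDegree_zero])
  · exact hne (Nat.eq_zero_of_dvd_of_lt hdvd hf)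

lemma exists_eq_C_mul_of_wronskian_eq_zero {f g : Polynomial K} (hg : g ≠ 0)
    (hfp : f.natDegree < p) (hgp : g.natDegree < p) (h : g.wronskian f = 0) :
    ∃ c, f = Polynomial.C c * g := by
  obtain rfl | hf := eq_or_ne f 0
  · exact ⟨0, by simp⟩
  obtain ⟨g₁, f₁, d, hrel, rfl, rfl⟩ := UniqueFactorizationMonoid.exists_reduced_factors g hg f
  obtain ⟨hd, hg₁⟩ := mul_ne_zero_iff.mp hg
  have hw : g₁.wronskian f₁ = 0 := by
    have hsq : (d * g₁).wronskian (d * f₁) = d ^ 2 * g₁.wronskian f₁ := by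
      simp only [Polynomial.wronskian, Polynomial.derivative_mul]
      ring
    rw [h, eq_comm, mul_eq_zero] at hsq
    exact hsq.resolve_left (pow_ne_zero _ hd)
  obtain ⟨hg₁', hf₁'⟩ := hrel.isCoprime.wronskian_eq_zero_iff.mp hw
  have hdeg_g := (Polynomial.natDegree_le_of_dvd (dvd_mul_left g₁ d) hg).trans_lt hgp
  have hdeg_f := (Polynomial.natDegree_le_of_dvd (dvd_mul_left f₁ d) hf).trans_lt hfp
  obtain ⟨a, rfl⟩ := Polynomial.natDegree_eq_zero.mp
    (natDegree_eq_zero_of_derivative_eq_zero hdeg_g hg₁')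
  obtain ⟨b, rfl⟩ := Polynomial.natDegree_eq_zero.mp
    (natDegree_eq_zero_of_derivative_eq_zero hdeg_f hf₁')
  have ha : a ≠ 0 := by simpa using hg₁
  refine ⟨b / a, ?_⟩
  rw [mul_left_comm, ← Polynomial.C_mul, div_mul_cancel₀ b ha]

-- The hypothesis says that the second derivative of `f / g` vanishes.
lemma exists_eq_linear_mul_of_wronskian_eq_zero {f g : Polynomial K} {d : ℕ} (hg : g ≠ 0)
    (hfd : f.natDegree ≤ d) (hgd : g.natDegree ≤ d) (hd : 2 * d + 1 < p)
    (h : (g ^ 2).wronskian (g.wronskian f) = 0) :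
    ∃ κ c, f = (Polynomial.C κ * Polynomial.X + Polynomial.C c) * g := by
  have hfg : (g.wronskian f).natDegree < p := by
    obtain hw | hw := eq_or_ne (g.wronskian f) 0
    · rw [hw, Polynomial.natDegree_zero]
      lia
    · have := Polynomial.natDegree_wronskian_lt_add hw
      lia
  obtain ⟨κ, hκ⟩ := exists_eq_C_mul_of_wronskian_eq_zero (p := p) (pow_ne_zero 2 hg) hfg
    (by rw [Polynomial.natDegree_pow]; lia) h
  have hlin : (Polynomial.C κ * Polynomial.X : Polynomial K).natDegree ≤ 1 := by compute_degree
  obtain ⟨c, hc⟩ := exists_eq_C_mul_of_wronskian_eq_zero (p := p)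
    (f := f - Polynomial.C κ * Polynomial.X * g) hg
    ((Polynomial.natDegree_sub_le _ _).trans_lt (max_lt (by lia)
      (Polynomial.natDegree_mul_le.trans_lt (by lia)))) (by lia)
    (by
      simp only [Polynomial.wronskian, Polynomial.derivative_sub, Polynomial.derivative_mul,
        Polynomial.derivative_C, Polynomial.derivative_X] at hκ ⊢
      linear_combination hκ)
  exact ⟨κ, c, by linear_combination hc⟩

end Wronskian

section PartialDerivatives

variable {σ R : Type*} [CommSemiring R]

lemma pderiv_comm (i j : σ) (F : MvPolynomial σ R) :
    pderiv i (pderiv j F) = pderiv j (pderiv i F) := by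
  classical
  obtain rfl | hij := eq_or_ne i j
  · rfl
  ext s
  simp only [coeff_pderiv, Finsupp.add_apply, Finsupp.single_eq_of_ne hij,
    Finsupp.single_eq_of_ne hij.symm, add_zero]
  rw [add_right_comm, mul_right_comm]

lemma totalDegree_pderiv_le (i : σ) (F : MvPolynomial σ R) :
    (pderiv i F).totalDegree ≤ F.totalDegree - 1 := by
  refine Finset.sup_le fun s hs => Nat.le_sub_of_add_le ?_
  have hs' : s + Finsupp.single i 1 ∈ F.support := by
    rw [mem_support_iff] at hs ⊢
    intro h
    exact hs (by rw [coeff_pderiv, h, zero_mul])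
  calc (s.sum fun _ e => e) + 1 = (s + Finsupp.single i 1).sum fun _ e => e := by
        rw [Finsupp.sum_add_index' (fun _ => rfl) (fun _ _ _ => rfl), Finsupp.sum_single_index rfl]
    _ ≤ F.totalDegree := le_totalDegree hs'

lemma totalDegree_eq_zero_of_pderiv_eq_zero [NoZeroDivisors R] {p : ℕ} [CharP R p]
    {F : MvPolynomial σ R} (hF : F.totalDegree < p) (h : ∀ i, pderiv i F = 0) :
    F.totalDegree = 0 := by
  refine (totalDegree_eq_zero_iff _ _).mpr fun s hs i => ?_
  by_contra hi
  have hs_eq : s - Finsupp.single i 1 + Finsupp.single i 1 = s :=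
    tsub_add_cancel_of_le (by simpa [Nat.one_le_iff_ne_zero] using hi)
  have hcoeff := coeff_pderiv (i := i) F (s - Finsupp.single i 1)
  have hsi : (s - Finsupp.single i 1 : σ →₀ ℕ) i + 1 = s i := by
    rw [Finsupp.tsub_apply, Finsupp.single_eq_same, Nat.sub_add_cancel (Nat.pos_of_ne_zero hi)]
  rw [h i, coeff_zero, hs_eq, ← Nat.cast_add_one, hsi, eq_comm, mul_eq_zero,
    CharP.cast_eq_zero_iff R p] at hcoeff
  have hle : s i ≤ F.totalDegree :=
    (Finsupp.le_degree i s).trans (le_totalDegree hs)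
  exact hi (Nat.eq_zero_of_dvd_of_lt (hcoeff.resolve_left (mem_support_iff.mp hs))
    (hle.trans_lt hF))

end PartialDerivatives

/-! ### Lines with directions on a conic -/

/-- The line `{(u, m - x u, b - m x + x² u) | u ∈ K}` in affine 3-space. These are the lines whose
direction `(1, -x, x²)` lies on a fixed conic at infinity. -/
@[ext]
structure ConicLine (K : Type*) where
  x : K
  m : K
  b : K
deriving DecidableEq

namespace ConicLine

variable {K : Type*} [Field K]

/-- The point of the line `q` with first coordinate `u`. -/
def point (q : ConicLine K) (u : K) : Fin 3 → K :=
  ![u, q.m - q.x * u, q.b - q.m * q.x + q.x ^ 2 * u]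

/-- Two lines have a common point; the first coordinate of such a point is its parameter on both
lines. -/
def Meets (r q : ConicLine K) : Prop := ∃ u, r.point u = q.point u

lemma Meets.refl (r : ConicLine K) : r.Meets r := ⟨0, rfl⟩

lemma Meets.symm {r q : ConicLine K} (h : r.Meets q) : q.Meets r := by
  obtain ⟨u, hu⟩ := h
  exact ⟨u, hu.symm⟩

lemma Meets.rel {r q : ConicLine K} (h : r.Meets q) : r.m * q.x + r.b = q.m * r.x + q.b := by
  obtain ⟨u, hu⟩ := h
  have h₁ : r.m - r.x * u = q.m - q.x * u := congrFun hu 1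
  have h₂ : r.b - r.m * r.x + r.x ^ 2 * u = q.b - q.m * q.x + q.x ^ 2 * u := congrFun hu 2
  linear_combination (r.x + q.x) * h₁ + h₂

lemma meets_of_rel {r q : ConicLine K} (hx : r.x ≠ q.x)
    (h : r.m * q.x + r.b = q.m * r.x + q.b) : r.Meets q := by
  have hx' : r.x - q.x ≠ 0 := sub_ne_zero.mpr hx
  have hu : (r.x - q.x) * ((r.m - q.m) / (r.x - q.x)) = r.m - q.m := mul_div_cancel₀ _ hx'
  refine ⟨(r.m - q.m) / (r.x - q.x), funext fun i => ?_⟩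
  fin_cases i
  · rfl
  · change r.m - r.x * _ = q.m - q.x * _
    linear_combination -hu
  · change r.b - r.m * r.x + r.x ^ 2 * _ = q.b - q.m * q.x + q.x ^ 2 * _
    linear_combination (r.x + q.x) * hu + h

/-- The restriction of a polynomial to the line `q`, as a polynomial in the parameter. -/
noncomputable def restrict (q : ConicLine K) : MvPolynomial (Fin 3) K →ₐ[K] Polynomial K :=
  aeval ![Polynomial.X, Polynomial.C q.m - Polynomial.C q.x * Polynomial.X,
    Polynomial.C (q.b - q.m * q.x) + Polynomial.C (q.x ^ 2) * Polynomial.X]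

lemma restrict_C (q : ConicLine K) (a : K) : q.restrict (C a) = Polynomial.C a := by
  simp [restrict]

lemma eval_restrict (q : ConicLine K) (u : K) (F : MvPolynomial (Fin 3) K) :
    (q.restrict F).eval u = eval (q.point u) F := by
  have hcomp : (Polynomial.aeval u).comp q.restrict = aeval (q.point u) := by
    refine algHom_ext fun i => ?_
    fin_cases i <;> simp [restrict, point]
  simpa [aeval_eq_eval] using DFunLike.congr_fun hcomp F

lemma natDegree_restrict_le (q : ConicLine K) (F : MvPolynomial (Fin 3) K) :
    (q.restrict F).natDegree ≤ F.totalDegree := by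
  refine (aeval_natDegree_le (n := 1) F le_rfl _ fun i => ?_).trans_eq (mul_one _)
  fin_cases i
  · exact Polynomial.natDegree_X_le
  · change (Polynomial.C q.m - Polynomial.C q.x * Polynomial.X : Polynomial K).natDegree ≤ 1
    compute_degree
  · change (Polynomial.C (q.b - q.m * q.x) + Polynomial.C (q.x ^ 2) * Polynomial.X :
      Polynomial K).natDegree ≤ 1
    compute_degree

/-- A family of pairwise disjoint lines. -/
def Skew (𝒜 : Finset (ConicLine K)) : Prop := ∀ r ∈ 𝒜, ∀ r' ∈ 𝒜, r.Meets r' → r = r'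

lemma Skew.mono {𝒜 ℬ : Finset (ConicLine K)} (h𝒜 : Skew 𝒜) (h : ℬ ⊆ 𝒜) : Skew ℬ :=
  fun r hr r' hr' => h𝒜 r (h hr) r' (h hr')

lemma Skew.card_le_natDegree {𝒜 : Finset (ConicLine K)} (h𝒜 : Skew 𝒜) {q : ConicLine K}
    {f : Polynomial K} (hf : f ≠ 0)
    (h : ∀ r ∈ 𝒜, ∃ u, r.point u = q.point u ∧ f.eval u = 0) : #𝒜 ≤ f.natDegree := by
  classical
  choose! u hu hroot using h
  refine (Finset.card_le_card_of_injOn u (t := f.roots.toFinset) ?_ ?_).trans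
    ((Multiset.toFinset_card_le _).trans (Polynomial.card_roots' f))
  · intro r hr
    simp [hf, hroot r hr]
  · intro r hr r' hr' heq
    exact h𝒜 r hr r' hr' ⟨u r, by rw [hu r hr, heq, hu r' hr']⟩

end ConicLine

section Derivatives

variable {K : Type*} [Field K]

/-- Differentiation along the direction `(1, -x, x²)` of the lines `q` with `q.x = x`. -/
noncomputable def dirDeriv (x : K) :
    Derivation K (MvPolynomial (Fin 3) K) (MvPolynomial (Fin 3) K) :=
  pderiv 0 - x • pderiv 1 + x ^ 2 • pderiv 2

/-- Differentiation along `(0, 1, -2x)`, which is minus the derivative of `(1, -x, x²)` in `x`. -/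
noncomputable def tanDeriv (x : K) :
    Derivation K (MvPolynomial (Fin 3) K) (MvPolynomial (Fin 3) K) :=
  pderiv 1 - (2 * x) • pderiv 2

lemma dirDeriv_apply (x : K) (F : MvPolynomial (Fin 3) K) :
    dirDeriv x F = pderiv 0 F - C x * pderiv 1 F + C (x ^ 2) * pderiv 2 F := by
  simp [dirDeriv, smul_eq_C_mul]

lemma tanDeriv_apply (x : K) (F : MvPolynomial (Fin 3) K) :
    tanDeriv x F = pderiv 1 F - C (2 * x) * pderiv 2 F := by
  simp [tanDeriv, smul_eq_C_mul]

lemma dirDeriv_eq_add (x y : K) (F : MvPolynomial (Fin 3) K) :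
    dirDeriv y F = dirDeriv x F - C (y - x) * tanDeriv x F + C (y - x) ^ 2 * pderiv 2 F := by
  simp only [dirDeriv_apply, tanDeriv_apply, C_sub, C_mul, C_pow, map_ofNat]
  ring

lemma dirDeriv_tanDeriv_comm (x : K) (F : MvPolynomial (Fin 3) K) :
    dirDeriv x (tanDeriv x F) = tanDeriv x (dirDeriv x F) := by
  simp only [dirDeriv_apply, tanDeriv_apply, map_sub, map_add, pderiv_C_mul]
  rw [pderiv_comm 1 0, pderiv_comm 2 0, pderiv_comm 2 1]
  ring

lemma dirDeriv_pderiv_comm (x : K) (i : Fin 3) (F : MvPolynomial (Fin 3) K) :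
    dirDeriv x (pderiv i F) = pderiv i (dirDeriv x F) := by
  simp only [dirDeriv_apply, map_sub, map_add, pderiv_C_mul, pderiv_comm i]

lemma ConicLine.derivative_restrict (q : ConicLine K) (F : MvPolynomial (Fin 3) K) :
    (q.restrict F).derivative = q.restrict (dirDeriv q.x F) := by
  induction F using MvPolynomial.induction_on with
  | C a => simp [restrict]
  | add F G hF hG => simp only [map_add, hF, hG]
  | mul_X F i hF =>
    have hX : (q.restrict (X i)).derivative = q.restrict (dirDeriv q.x (X i)) := by
      fin_cases i <;> simp [restrict, dirDeriv_apply, pderiv_X, Polynomial.derivative_pow]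
    rw [map_mul, Polynomial.derivative_mul, hF, hX, Derivation.leibniz]
    simp only [smul_eq_mul, map_add, map_mul]
    ring

lemma totalDegree_tanDeriv_le (x : K) (F : MvPolynomial (Fin 3) K) :
    (tanDeriv x F).totalDegree ≤ F.totalDegree - 1 := by
  rw [tanDeriv_apply]
  refine (totalDegree_sub _ _).trans (max_le (totalDegree_pderiv_le 1 F) ?_)
  refine (totalDegree_mul _ _).trans ?_
  rw [totalDegree_C, zero_add]
  exact totalDegree_pderiv_le 2 F

end Derivatives

/-! ### Surfaces that are doubly ruled by the lines -/

section DoublyRuled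

variable {K : Type*} [Field K]

/-- The polynomials `dirDeriv x P` and `dirDeriv x (dirDeriv x P)` have degrees two and four in the
coefficient `x`. This is the constant term of the pseudo-remainder of the second by the first. -/
noncomputable def remConst (P : MvPolynomial (Fin 3) K) : MvPolynomial (Fin 3) K :=
  pderiv 0 (pderiv 0 P) * pderiv 2 P ^ 3
  - (pderiv 1 (pderiv 1 P) + 2 * pderiv 0 (pderiv 2 P)) * (pderiv 2 P ^ 2 * pderiv 0 P)
  + 2 * pderiv 1 (pderiv 2 P) * (pderiv 2 P * pderiv 0 P * pderiv 1 P)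
  - pderiv 2 (pderiv 2 P) * (pderiv 0 P * (pderiv 1 P ^ 2 - pderiv 0 P * pderiv 2 P))

/-- The coefficient of `x` in the pseudo-remainder described at `remConst`. -/
noncomputable def remLin (P : MvPolynomial (Fin 3) K) : MvPolynomial (Fin 3) K :=
  (pderiv 1 (pderiv 1 P) + 2 * pderiv 0 (pderiv 2 P)) * (pderiv 2 P ^ 2 * pderiv 1 P)
  - 2 * pderiv 0 (pderiv 1 P) * pderiv 2 P ^ 3
  - 2 * pderiv 1 (pderiv 2 P) * (pderiv 2 P * (pderiv 1 P ^ 2 - pderiv 0 P * pderiv 2 P))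
  + pderiv 2 (pderiv 2 P) * (pderiv 1 P ^ 3 - 2 * pderiv 0 P * pderiv 1 P * pderiv 2 P)

/-- The pseudo-quotient that belongs to the pseudo-remainder described at `remConst`. -/
noncomputable def pseudoQuot (x : K) (P : MvPolynomial (Fin 3) K) : MvPolynomial (Fin 3) K :=
  pderiv 2 (pderiv 2 P) * pderiv 2 P ^ 2 * C x ^ 2
  + (- 2 * pderiv 1 (pderiv 2 P) * pderiv 2 P ^ 2
    + pderiv 2 (pderiv 2 P) * pderiv 1 P * pderiv 2 P) * C x
  + ((pderiv 1 (pderiv 1 P) + 2 * pderiv 0 (pderiv 2 P)) * pderiv 2 P ^ 2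
    - 2 * pderiv 1 (pderiv 2 P) * pderiv 1 P * pderiv 2 P
    + pderiv 2 (pderiv 2 P) * (pderiv 1 P ^ 2 - pderiv 0 P * pderiv 2 P))

lemma remConst_add_C_mul_remLin (x : K) (P : MvPolynomial (Fin 3) K) :
    remConst P + C x * remLin P =
      pderiv 2 P ^ 3 * dirDeriv x (dirDeriv x P) - pseudoQuot x P * dirDeriv x P := by
  simp only [dirDeriv_apply, remConst, remLin, pseudoQuot, map_sub, map_add, pderiv_C_mul]
  rw [C_pow, pderiv_comm 1 0, pderiv_comm 2 0, pderiv_comm 2 1]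
  ring

-- Differentiate `remConst_add_C_mul_remLin` with respect to the coefficient `x`.
lemma dirDeriv_dvd_remLin_sub (x : K) (P : MvPolynomial (Fin 3) K) :
    dirDeriv x P ∣ remLin P -
      (pseudoQuot x P * tanDeriv x P - 2 * pderiv 2 P ^ 3 * dirDeriv x (tanDeriv x P)) := by
  refine ⟨-(2 * (pderiv 2 (pderiv 2 P) * pderiv 2 P ^ 2 * C x) - 2 * pderiv 1 (pderiv 2 P) *
    pderiv 2 P ^ 2 + pderiv 2 (pderiv 2 P) * pderiv 1 P * pderiv 2 P), ?_⟩
  simp only [dirDeriv_apply, tanDeriv_apply, remLin, pseudoQuot, map_sub, pderiv_C_mul]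
  rw [C_pow, C_mul, map_ofNat, pderiv_comm 2 1]
  ring

namespace ConicLine

variable {q r : ConicLine K} {P : MvPolynomial (Fin 3) K}

lemma restrict_dirDeriv_eq_zero (hq : q.restrict P = 0) : q.restrict (dirDeriv q.x P) = 0 := by
  rw [← derivative_restrict, hq, Polynomial.derivative_zero]

lemma eval_remConst_add_eq_zero (hq : q.restrict P = 0) (u : K) :
    eval (q.point u) (remConst P) + q.x * eval (q.point u) (remLin P) = 0 := by
  have hq₁ := restrict_dirDeriv_eq_zero hq
  have h := congrArg (fun F => (q.restrict F).eval u) (remConst_add_C_mul_remLin q.x P)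
  simp only [map_sub, map_mul, hq₁, restrict_dirDeriv_eq_zero hq₁, mul_zero, sub_zero,
    Polynomial.eval_zero] at h
  simpa [eval_restrict] using h

lemma eval_remConst_remLin_eq_zero {u : K} (hr : r.restrict P = 0) (hq : q.restrict P = 0)
    (hu : r.point u = q.point u) (hx : r.x ≠ q.x) :
    (q.restrict (remConst P)).eval u = 0 ∧ (q.restrict (remLin P)).eval u = 0 := by
  have h_r := eval_remConst_add_eq_zero hr u
  have h_q := eval_remConst_add_eq_zero hq u
  rw [hu] at h_r
  have hlin : eval (q.point u) (remLin P) = 0 :=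
    (mul_eq_zero.mp (by linear_combination h_r - h_q :
      (r.x - q.x) * eval (q.point u) (remLin P) = 0)).resolve_left (sub_ne_zero.mpr hx)
  rw [eval_restrict, eval_restrict]
  exact ⟨by simpa [hlin] using h_q, hlin⟩

end ConicLine

/-- Suppose `dirDeriv x P = 0` at a point. The quadratic `y ↦ dirDeriv y P` has the second root
`y = x + tanDeriv x P / pderiv 2 P` there, and this is differentiation along the direction
`(1, -y, y²)`, multiplied by `(pderiv 2 P)²` to clear denominators. -/
noncomputable def residualDeriv (x : K) (P : MvPolynomial (Fin 3) K) :
    Derivation K (MvPolynomial (Fin 3) K) (MvPolynomial (Fin 3) K) :=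
  pderiv 2 P ^ 2 • dirDeriv x - (pderiv 2 P * tanDeriv x P) • tanDeriv x
    + tanDeriv x P ^ 2 • pderiv 2

lemma residualDeriv_apply (x : K) (P F : MvPolynomial (Fin 3) K) :
    residualDeriv x P F = pderiv 2 P ^ 2 * dirDeriv x F - pderiv 2 P * tanDeriv x P * tanDeriv x F
      + tanDeriv x P ^ 2 * pderiv 2 F := by
  simp [residualDeriv]

namespace ConicLine

variable {q : ConicLine K} {P F : MvPolynomial (Fin 3) K}

lemma restrict_residualDeriv_eq_zero_of_dvd (hq : q.restrict P = 0) (hF : P ∣ F) :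
    q.restrict (residualDeriv q.x P F) = 0 := by
  obtain ⟨E, rfl⟩ := hF
  have hP : q.restrict (residualDeriv q.x P P) = 0 := by
    simp only [residualDeriv_apply, map_add, map_sub, map_mul, map_pow,
      restrict_dirDeriv_eq_zero hq]
    ring
  simp [Derivation.leibniz, hP, hq]

lemma restrict_residualDeriv_of_restrict_dirDeriv_eq_zero (h : q.restrict (dirDeriv q.x F) = 0) :
    q.restrict (residualDeriv q.x P F) = q.restrict (tanDeriv q.x P) *
      (q.restrict (tanDeriv q.x P) * q.restrict (pderiv 2 F) -
        q.restrict (pderiv 2 P) * q.restrict (tanDeriv q.x F)) := by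
  simp only [residualDeriv_apply, map_add, map_sub, map_mul, map_pow, h]
  ring

lemma wronskian_wronskian_eq_zero (hq : q.restrict P = 0) (hconst : P ∣ remConst P)
    (hlin : P ∣ remLin P) (hG : q.restrict (pderiv 2 P) ≠ 0) :
    (q.restrict (tanDeriv q.x P) ^ 2).wronskian
      ((q.restrict (tanDeriv q.x P)).wronskian (q.restrict (pderiv 2 P))) = 0 := by
  set T := q.restrict (tanDeriv q.x P)
  set G := q.restrict (pderiv 2 P)
  set Q := q.restrict (pseudoQuot q.x P)
  set U := dirDeriv q.x P
  have hU : q.restrict U = 0 := restrict_dirDeriv_eq_zero hq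
  have hDU : q.restrict (dirDeriv q.x U) = 0 := restrict_dirDeriv_eq_zero hU
  have hrem : G ^ 3 * q.restrict (residualDeriv q.x P (dirDeriv q.x U)) =
      Q * q.restrict (residualDeriv q.x P U) := by
    have h := restrict_residualDeriv_eq_zero_of_dvd hq (dvd_add hconst (hlin.mul_left (C q.x)))
    rw [remConst_add_C_mul_remLin, map_sub, Derivation.leibniz, Derivation.leibniz] at h
    simp only [smul_eq_mul, map_sub, map_add, map_mul, map_pow] at h
    linear_combination h - q.restrict (residualDeriv q.x P (pderiv 2 P ^ 3)) * hDU +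
      q.restrict (residualDeriv q.x P (pseudoQuot q.x P)) * hU
  have hQ : Q * T = 2 * G ^ 3 * T.derivative := by
    obtain ⟨E, hE⟩ := dirDeriv_dvd_remLin_sub q.x P
    obtain ⟨E', hE'⟩ := hlin
    have h := congrArg q.restrict hE
    simp only [hE', map_sub, map_mul, map_pow, map_ofNat, hq, restrict_dirDeriv_eq_zero hq,
      zero_mul, ← derivative_restrict] at h
    linear_combination -h
  have hcancel : G ^ 3 * (T ^ 2).wronskian (T.wronskian G) = 0 := by
    rw [restrict_residualDeriv_of_restrict_dirDeriv_eq_zero hDU,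
      restrict_residualDeriv_of_restrict_dirDeriv_eq_zero (restrict_dirDeriv_eq_zero hDU)] at hrem
    simp only [← dirDeriv_tanDeriv_comm, ← dirDeriv_pderiv_comm, ← derivative_restrict, U] at hrem
    simp only [Polynomial.wronskian, Polynomial.derivative_sub, Polynomial.derivative_mul,
      Polynomial.derivative_pow, Nat.cast_ofNat, map_ofNat, Nat.add_one_sub_one, pow_one]
    linear_combination T * hrem + T * (T * G.derivative - G * T.derivative) * hQ
  exact (mul_eq_zero.mp hcancel).resolve_left (pow_ne_zero 3 hG)

lemma exists_restrict_pderiv_eq_linear_mul {p : ℕ} [CharP K p] (hd : 2 * P.totalDegree + 1 < p)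
    (hq : q.restrict P = 0) (hconst : P ∣ remConst P) (hlin : P ∣ remLin P)
    (hG : q.restrict (pderiv 2 P) ≠ 0) (hT : q.restrict (tanDeriv q.x P) ≠ 0) :
    ∃ κ c, q.restrict (pderiv 2 P) =
      (Polynomial.C κ * Polynomial.X + Polynomial.C c) * q.restrict (tanDeriv q.x P) :=
  exists_eq_linear_mul_of_wronskian_eq_zero (d := P.totalDegree) hT
    ((natDegree_restrict_le _ _).trans ((totalDegree_pderiv_le 2 P).trans (Nat.sub_le _ _)))
    ((natDegree_restrict_le _ _).trans ((totalDegree_tanDeriv_le q.x P).trans (Nat.sub_le _ _)))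
    hd (wronskian_wronskian_eq_zero hq hconst hlin hG)

end ConicLine

end DoublyRuled

/-! ### Counting conditions on polynomials -/

section Dimension

lemma finrank_restrictTotalDegree (σ K : Type*) [Fintype σ] [Field K] (D : ℕ) :
    Module.finrank K (restrictTotalDegree σ K D) =
      (D + Fintype.card σ).choose (Fintype.card σ) := by
  classical
  have hbasis : Module.finrank K (restrictTotalDegree σ K D) =
      Nat.card {n : σ →₀ ℕ | (n.sum fun _ e => e) ≤ D} :=
    Module.finrank_eq_nat_card_basis (basisRestrictSupport K _)
  have hunion : {n : σ →₀ ℕ | (n.sum fun _ e => e) ≤ D} =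
      ((range (D + 1)).biUnion fun k => (univ : Finset σ).finsuppAntidiag k : Finset _) := by
    ext n
    simp [Finsupp.sum_fintype]
  have hdisj : ((range (D + 1) : Finset ℕ) : Set ℕ).PairwiseDisjoint
      fun k => (univ : Finset σ).finsuppAntidiag k := by
    intro a _ b _ hab
    rw [Function.onFun, Finset.disjoint_left]
    intro s ha hb
    exact hab ((mem_finsuppAntidiag.mp ha).1.symm.trans (mem_finsuppAntidiag.mp hb).1)
  rw [hbasis, hunion, Nat.card_coe_set_eq, Set.ncard_coe_finset, card_biUnion hdisj,
    ← Nat.sum_range_multichoose]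
  simp only [card_finsuppAntidiag_nat_eq_multichoose, card_univ]

lemma six_mul_finrank_restrictTotalDegree (K : Type*) [Field K] (D : ℕ) :
    6 * Module.finrank K (restrictTotalDegree (Fin 3) K D) = (D + 1) * (D + 2) * (D + 3) := by
  have h := Nat.ascFactorial_eq_factorial_mul_choose D 3
  simp only [Nat.ascFactorial, Nat.factorial] at h
  rw [finrank_restrictTotalDegree, Fintype.card_fin]
  linarith

variable {σ K : Type*} [Field K]

lemma finrank_map_mulLeft {P : MvPolynomial σ K} (hP : P ≠ 0)
    (V : Submodule K (MvPolynomial σ K)) :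
    Module.finrank K (V.map (LinearMap.mulLeft K P)) = Module.finrank K V :=
  (Submodule.equivMapOfInjective _ (mul_right_injective₀ hP) V).finrank_eq.symm

lemma map_mulLeft_le (P : MvPolynomial σ K) (D : ℕ) :
    (restrictTotalDegree σ K D).map (LinearMap.mulLeft K P) ≤
      restrictTotalDegree σ K (P.totalDegree + D) := by
  rw [Submodule.map_le_iff_le_comap]
  intro F hF
  rw [mem_restrictTotalDegree] at hF
  rw [Submodule.mem_comap, LinearMap.mulLeft_apply, mem_restrictTotalDegree]
  exact (totalDegree_mul _ _).trans (Nat.add_le_add_left hF _)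

lemma finrank_add_finrank_le_of_not_dvd [Finite σ] {P Q : MvPolynomial σ K} (hP : Prime P)
    (hPQ : ¬ P ∣ Q) (N : ℕ) :
    Module.finrank K (restrictTotalDegree σ K (Q.totalDegree + N)) +
        Module.finrank K (restrictTotalDegree σ K (P.totalDegree + N)) ≤
      Module.finrank K
        ↥((restrictTotalDegree σ K (Q.totalDegree + N)).map (LinearMap.mulLeft K P) ⊔
          (restrictTotalDegree σ K (P.totalDegree + N)).map (LinearMap.mulLeft K Q)) +
      Module.finrank K (restrictTotalDegree σ K N) := by
  have hQ : Q ≠ 0 := by rintro rfl; exact hPQ (dvd_zero P)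
  have hinf : (restrictTotalDegree σ K (Q.totalDegree + N)).map (LinearMap.mulLeft K P) ⊓
      (restrictTotalDegree σ K (P.totalDegree + N)).map (LinearMap.mulLeft K Q) ≤
      (restrictTotalDegree σ K N).map (LinearMap.mulLeft K (Q * P)) := by
    rintro _ ⟨⟨F, -, rfl⟩, ⟨G, hG, hFG⟩⟩
    obtain ⟨E, rfl⟩ := (hP.dvd_or_dvd (⟨F, hFG⟩ : P ∣ Q * G)).resolve_left hPQ
    refine ⟨E, (mem_restrictTotalDegree _ _ _).mpr ?_, (mul_assoc Q P E).trans hFG⟩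
    rcases eq_or_ne E 0 with rfl | hE
    · simp
    · have h := (mem_restrictTotalDegree _ _ _).mp hG
      rw [totalDegree_mul_of_isDomain hP.ne_zero hE] at h
      omega
  rw [← finrank_map_mulLeft hP.ne_zero (restrictTotalDegree σ K (Q.totalDegree + N)),
    ← finrank_map_mulLeft hQ (restrictTotalDegree σ K (P.totalDegree + N)),
    ← Submodule.finrank_sup_add_finrank_inf_eq,
    ← finrank_map_mulLeft (mul_ne_zero hQ hP.ne_zero) (restrictTotalDegree σ K N)]
  exact Nat.add_le_add_left (Submodule.finrank_mono hinf) _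

end Dimension

namespace ConicLine

variable {K : Type*} [Field K]

lemma exists_restrict_eq_zero_of_card_lt {𝒜 : Finset (ConicLine K)} {d : ℕ}
    (h : 6 * #𝒜 < (d + 2) * (d + 3)) :
    ∃ P : MvPolynomial (Fin 3) K, P ≠ 0 ∧ P.totalDegree ≤ d ∧ ∀ q ∈ 𝒜, q.restrict P = 0 := by
  let coeffs : restrictTotalDegree (Fin 3) K d →ₗ[K] (𝒜 × Fin (d + 1) → K) :=
    LinearMap.pi fun i => Polynomial.lcoeff K (i.2 : ℕ) ∘ₗ i.1.1.restrict.toLinearMap ∘ₗ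
      Submodule.subtype _
  have hker : LinearMap.ker coeffs ≠ ⊥ := by
    apply LinearMap.ker_ne_bot_of_finrank_lt
    rw [Module.finrank_fintype_fun_eq_card, Fintype.card_prod, Fintype.card_coe, Fintype.card_fin]
    have := six_mul_finrank_restrictTotalDegree K d
    nlinarith
  obtain ⟨P, hP, hne⟩ := Submodule.exists_mem_ne_zero_of_ne_bot hker
  have hdeg := (mem_restrictTotalDegree _ _ _).mp P.2
  refine ⟨P, by simpa using hne, hdeg, fun q hq => Polynomial.ext fun i => ?_⟩
  rcases lt_or_ge i (d + 1) with hi | hi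
  · exact congrFun (LinearMap.mem_ker.mp hP) (⟨q, hq⟩, ⟨i, hi⟩)
  · exact Polynomial.coeff_eq_zero_of_natDegree_lt
      (((natDegree_restrict_le q _).trans hdeg).trans_lt hi)

lemma exists_restrict_ne_zero_and_restrict_eq_zero {q r : ConicLine K} (h : q ≠ r) :
    ∃ F : MvPolynomial (Fin 3) K, F.totalDegree ≤ 1 ∧ q.restrict F ≠ 0 ∧ r.restrict F = 0 := by
  have hX (i : Fin 3) : (X i : MvPolynomial (Fin 3) K).totalDegree ≤ 1 := (totalDegree_X i).le
  have hC (a : K) (i : Fin 3) : (C a * X i : MvPolynomial (Fin 3) K).totalDegree ≤ 1 :=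
    (totalDegree_mul _ _).trans (by rw [totalDegree_C, totalDegree_X])
  have hzero {F : MvPolynomial (Fin 3) K} (hF : q.restrict F = 0) (u : K) :
      eval (q.point u) F = 0 := by rw [← eval_restrict, hF, Polynomial.eval_zero]
  by_cases hxm : q.x = r.x ∧ q.m = r.m
  · refine ⟨X 2 - C (r.x ^ 2) * X 0 - C (r.b - r.m * r.x), ?_, fun h₀ => h ?_, ?_⟩
    · refine (totalDegree_sub_C_le _ _).trans ?_
      exact (totalDegree_sub _ _).trans (max_le (hX 2) (hC _ 0))
    · have e₀ := hzero h₀ 0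
      simp only [point, hxm, map_sub, map_mul, eval_X, eval_C, Matrix.cons_val] at e₀
      exact ConicLine.ext hxm.1 hxm.2 (by linear_combination e₀)
    · simp [restrict]
  · refine ⟨X 1 + C r.x * X 0 - C r.m, ?_, fun h₀ => hxm ?_, ?_⟩
    · refine (totalDegree_sub_C_le _ _).trans ?_
      exact (totalDegree_add _ _).trans (max_le (hX 1) (hC _ 0))
    · have e₀ := hzero h₀ 0
      have e₁ := hzero h₀ 1
      simp only [point, map_sub, map_add, map_mul, eval_X, eval_C, Matrix.cons_val] at e₀ e₁
      exact ⟨by linear_combination e₀ - e₁, by linear_combination e₀⟩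
    · simp [restrict]

lemma exists_separating (ℬ : Finset (ConicLine K)) (q : ConicLine K) :
    ∃ F : MvPolynomial (Fin 3) K, F.totalDegree ≤ #ℬ ∧ q.restrict F ≠ 0 ∧
      ∀ r ∈ ℬ, r ≠ q → r.restrict F = 0 := by
  classical
  choose! F hdeg hq hr using fun r (h : q ≠ r) => exists_restrict_ne_zero_and_restrict_eq_zero h
  have hne (r) (hr : r ∈ ℬ.erase q) : q ≠ r := (ne_of_mem_erase hr).symm
  refine ⟨∏ r ∈ ℬ.erase q, F r, ?_, ?_, fun r hrℬ hrq => ?_⟩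
  · calc (∏ r ∈ ℬ.erase q, F r).totalDegree
        ≤ ∑ r ∈ ℬ.erase q, (F r).totalDegree := totalDegree_finsetProd _ _
      _ ≤ #(ℬ.erase q) • 1 := sum_le_card_nsmul _ _ _ fun r hr => hdeg r (hne r hr)
      _ ≤ #ℬ := by simpa using card_le_card (erase_subset q ℬ)
  · rw [map_prod]
    exact prod_ne_zero_iff.mpr fun r hr => hq r (hne r hr)
  · rw [map_prod]
    exact prod_eq_zero (mem_erase.mpr ⟨hrq, hrℬ⟩) (hr r hrq.symm)

lemma exists_injective_restrict (ℬ : Finset (ConicLine K)) (E : ℕ) :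
    ∃ G : (ℬ × Fin E → K) →ₗ[K] MvPolynomial (Fin 3) K,
      LinearMap.range G ≤ restrictTotalDegree (Fin 3) K (#ℬ + E) ∧
      ∀ v, (∀ q ∈ ℬ, q.restrict (G v) = 0) → v = 0 := by
  choose F hdeg hne hzero using exists_separating ℬ
  let G : (ℬ × Fin E → K) →ₗ[K] MvPolynomial (Fin 3) K :=
    Fintype.linearCombination K fun i : ℬ × Fin E => F i.1 * X 0 ^ (i.2 : ℕ)
  have hG (v) (q : ℬ) : q.1.restrict (G v) =
      q.1.restrict (F q) * ∑ e : Fin E, Polynomial.monomial (e : ℕ) (v (q, e)) := by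
    have hX : q.1.restrict (X 0) = Polynomial.X := by simp [restrict]
    rw [Fintype.linearCombination_apply, map_sum, Fintype.sum_prod_type, sum_eq_single q]
    · rw [mul_sum]
      refine sum_congr rfl fun e _ => ?_
      rw [map_smul, map_mul, map_pow, hX, Polynomial.smul_eq_C_mul,
        ← Polynomial.C_mul_X_pow_eq_monomial, mul_left_comm]
    · intro r _ hrq
      refine sum_eq_zero fun e _ => ?_
      rw [map_smul, map_mul, hzero r q q.2 fun h => hrq (Subtype.ext h.symm), zero_mul, smul_zero]
    · exact fun h => absurd (mem_univ q) h
  refine ⟨G, ?_, fun v hv => funext fun ⟨q, e⟩ => ?_⟩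
  · rintro _ ⟨v, rfl⟩
    refine Submodule.sum_mem _ fun i _ => Submodule.smul_mem _ _ ?_
    rw [mem_restrictTotalDegree]
    refine (totalDegree_mul _ _).trans (add_le_add (hdeg _) ?_)
    rw [totalDegree_X_pow]
    exact i.2.2.le
  · have hsum := (mul_eq_zero.mp ((hG v q).symm.trans (hv q q.2))).resolve_left (hne q)
    have hcoeff := congrArg (Polynomial.coeff · (e : ℕ)) hsum
    simpa [Polynomial.coeff_monomial, Fin.val_inj] using hcoeff

variable {P Q : MvPolynomial (Fin 3) K} {ℬ : Finset (ConicLine K)}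

lemma finrank_add_card_mul_le (hP : Prime P) (hPQ : ¬ P ∣ Q) (hPℬ : ∀ q ∈ ℬ, q.restrict P = 0)
    (hQℬ : ∀ q ∈ ℬ, q.restrict Q = 0) {N E : ℕ}
    (hE : #ℬ + E = P.totalDegree + Q.totalDegree + N) :
    Module.finrank K (restrictTotalDegree (Fin 3) K (Q.totalDegree + N)) +
        Module.finrank K (restrictTotalDegree (Fin 3) K (P.totalDegree + N)) + #ℬ * E ≤
      Module.finrank K (restrictTotalDegree (Fin 3) K (P.totalDegree + Q.totalDegree + N)) +
        Module.finrank K (restrictTotalDegree (Fin 3) K N) := by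
  obtain ⟨G, hGdeg, hG⟩ := exists_injective_restrict ℬ E
  set V := restrictTotalDegree (Fin 3) K (P.totalDegree + Q.totalDegree + N)
  set I := (restrictTotalDegree (Fin 3) K (Q.totalDegree + N)).map (LinearMap.mulLeft K P) ⊔
    (restrictTotalDegree (Fin 3) K (P.totalDegree + N)).map (LinearMap.mulLeft K Q) with hI
  have hIzero : ∀ F ∈ I, ∀ q ∈ ℬ, q.restrict F = 0 := by
    intro F hF q hq
    obtain ⟨_, ⟨F₁, -, rfl⟩, _, ⟨F₂, -, rfl⟩, rfl⟩ := Submodule.mem_sup.mp hF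
    simp [hPℬ q hq, hQℬ q hq]
  have hIV : I ≤ V := by
    refine sup_le ((map_mulLeft_le _ _).trans_eq ?_) ((map_mulLeft_le _ _).trans_eq ?_)
    · rw [← add_assoc]
    · rw [add_left_comm, ← add_assoc]
  have hGI : LinearMap.range G ⊓ I = ⊥ := by
    rw [eq_bot_iff]
    rintro _ ⟨⟨v, rfl⟩, hv⟩
    rw [hG v (hIzero _ hv), map_zero]
    exact Submodule.zero_mem _
  have hGrank : Module.finrank K (LinearMap.range G) = #ℬ * E := by
    have hGinj : Function.Injective G := (injective_iff_map_eq_zero G).mpr fun v hv =>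
      hG v fun q _ => by rw [hv, map_zero]
    rw [LinearMap.finrank_range_of_inj hGinj, Module.finrank_fintype_fun_eq_card,
      Fintype.card_prod, Fintype.card_coe, Fintype.card_fin]
  have : FiniteDimensional K I := Submodule.finiteDimensional_of_le hIV
  have hle := Submodule.finrank_mono (sup_le (hE ▸ hGdeg) hIV)
  have hsum := Submodule.finrank_sup_add_finrank_inf_eq (LinearMap.range G) I
  rw [hGI, finrank_bot, hGrank] at hsum
  have hsyz := finrank_add_finrank_le_of_not_dvd hP hPQ N
  rw [← hI] at hsyz
  omega

-- Let `N → ∞` in `finrank_add_card_mul_le` and compare the coefficients of `N`.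
lemma card_le_totalDegree_mul_totalDegree (hP : Prime P) (hPQ : ¬ P ∣ Q)
    (hPℬ : ∀ q ∈ ℬ, q.restrict P = 0) (hQℬ : ∀ q ∈ ℬ, q.restrict Q = 0) :
    #ℬ ≤ P.totalDegree * Q.totalDegree := by
  by_contra! hlt
  obtain ⟨N, hN⟩ : ∃ N, N = #ℬ * #ℬ +
    P.totalDegree * Q.totalDegree * (P.totalDegree + Q.totalDegree + 2) + 1 := ⟨_, rfl⟩
  have hℬN : #ℬ ≤ N := by
    have := Nat.le_mul_self #ℬ
    have := Nat.zero_le (P.totalDegree * Q.totalDegree * (P.totalDegree + Q.totalDegree + 2))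
    omega
  obtain ⟨E, hE⟩ : ∃ E, P.totalDegree + Q.totalDegree + N = #ℬ + E :=
    Nat.exists_eq_add_of_le (by omega)
  have hrank := finrank_add_card_mul_le hP hPQ hPℬ hQℬ hE.symm
  have e₁ := six_mul_finrank_restrictTotalDegree K (Q.totalDegree + N)
  have e₂ := six_mul_finrank_restrictTotalDegree K (P.totalDegree + N)
  have e₃ := six_mul_finrank_restrictTotalDegree K (P.totalDegree + Q.totalDegree + N)
  have e₄ := six_mul_finrank_restrictTotalDegree K N
  set d := P.totalDegree
  set e := Q.totalDegree
  set n := #ℬ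
  have hupper : 2 * (n * E) ≤ d * e * (2 * N + (d + e) + 4) := by nlinarith
  have hlower : n * N ≤ n * E + n * n := by nlinarith
  have hcmp : (d * e + 1) * N ≤ n * N := Nat.mul_le_mul_right _ hlt
  have hlinear : 2 * N ≤ d * e * (d + e + 4) + 2 * (n * n) := by
    linarith only [hupper, hlower, hcmp]
  nlinarith only [hlinear, hN, Nat.zero_le (d * e * (d + e))]

end ConicLine

/-! ### Lines on an irreducible surface -/

section Degree

lemma totalDegree_ne_zero_of_prime {σ K : Type*} [Field K] {P : MvPolynomial σ K} (hP : Prime P) :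
    P.totalDegree ≠ 0 := by
  intro h
  have hC := totalDegree_eq_zero_iff_eq_C.mp h
  refine hP.not_isUnit (isUnit_iff_totalDegree_of_isReduced.mpr ⟨?_, h⟩)
  exact isUnit_iff_ne_zero.mpr fun h₀ => hP.ne_zero (by rw [hC, h₀, C_0])

lemma exists_not_dvd_pderiv {σ K : Type*} [Field K] {p : ℕ} [CharP K p] {P : MvPolynomial σ K}
    (hP : Prime P) (hd : P.totalDegree < p) : ∃ i, ¬ P ∣ pderiv i P := by
  have hpos := totalDegree_ne_zero_of_prime hP
  by_contra! hdvd
  refine hpos (totalDegree_eq_zero_of_pderiv_eq_zero hd fun i => ?_)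
  by_contra hne
  have hle := totalDegree_le_of_dvd_of_isDomain (hdvd i) hne
  have := totalDegree_pderiv_le i P
  omega

variable {K : Type*} [Field K]

lemma totalDegree_remConst_le_and_remLin_le (P : MvPolynomial (Fin 3) K) :
    (remConst P).totalDegree ≤ 4 * P.totalDegree ∧ (remLin P).totalDegree ≤ 4 * P.totalDegree := by
  set d := P.totalDegree
  let V (n : ℕ) := restrictTotalDegree (Fin 3) K n
  have mul {m n N : ℕ} {F G : MvPolynomial (Fin 3) K} (hF : F ∈ V m) (hG : G ∈ V n)
      (hN : m + n = N) : F * G ∈ V N := by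
    simp only [V, mem_restrictTotalDegree] at hF hG ⊢
    exact hN ▸ (totalDegree_mul _ _).trans (add_le_add hF hG)
  have two {n : ℕ} {F : MvPolynomial (Fin 3) K} (hF : F ∈ V n) : 2 * F ∈ V n := by
    rw [two_mul]; exact (V n).add_mem hF hF
  have first (i) : pderiv i P ∈ V d :=
    (mem_restrictTotalDegree _ _ _).mpr ((totalDegree_pderiv_le i P).trans (Nat.sub_le _ _))
  have second (i j) : pderiv i (pderiv j P) ∈ V d :=
    (mem_restrictTotalDegree _ _ _).mpr ((totalDegree_pderiv_le i _).trans
      ((Nat.sub_le _ _).trans ((mem_restrictTotalDegree _ _ _).mp (first j))))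
  have hsum : pderiv 1 (pderiv 1 P) + 2 * pderiv 0 (pderiv 2 P) ∈ V d :=
    (V d).add_mem (second 1 1) (two (second 0 2))
  have prod (i j) : pderiv i P * pderiv j P ∈ V (2 * d) := mul (first i) (first j) (by ring)
  have sq (i) : pderiv i P ^ 2 ∈ V (2 * d) := pow_two (pderiv i P) ▸ prod i i
  have cube (i) : pderiv i P ^ 3 ∈ V (3 * d) :=
    pow_succ (pderiv i P) 2 ▸ mul (sq i) (first i) (by ring)
  have hdisc : pderiv 1 P ^ 2 - pderiv 0 P * pderiv 2 P ∈ V (2 * d) :=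
    (V _).sub_mem (sq 1) (prod 0 2)
  have hsq (i) : pderiv 2 P ^ 2 * pderiv i P ∈ V (3 * d) := mul (sq 2) (first i) (by ring)
  rw [← mem_restrictTotalDegree, ← mem_restrictTotalDegree]
  have top {S T : MvPolynomial (Fin 3) K} (hS : S ∈ V d) (hT : T ∈ V (3 * d)) :
      S * T ∈ V (4 * d) := mul hS hT (by ring)
  constructor
  · exact (V _).sub_mem ((V _).add_mem ((V _).sub_mem (top (second 0 0) (cube 2))
      (top hsum (hsq 0))) (top (two (second 1 2)) (mul (prod 2 0) (first 1) (by ring))))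
      (top (second 2 2) (mul (first 0) hdisc (by ring)))
  · exact (V _).add_mem ((V _).sub_mem ((V _).sub_mem (top hsum (hsq 1))
      (top (two (second 0 1)) (cube 2))) (top (two (second 1 2)) (mul (first 2) hdisc (by ring))))
      (top (second 2 2) ((V _).sub_mem (cube 1)
        (mul (mul (two (first 0)) (first 1) (two_mul d).symm) (first 2) (by ring))))

end Degree

namespace ConicLine

open scoped Classical in
/-- The lines of `𝒜` that meet `q`. -/
noncomputable def meeting {K : Type*} [Field K] (𝒜 : Finset (ConicLine K)) (q : ConicLine K) :
    Finset (ConicLine K) := {r ∈ 𝒜 | r.Meets q}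

open scoped Classical in
/-- The lines of `𝒜` that meet `q` and belong to a fixed regulus through `q`. If `r` meets `q` at
the parameter `u`, then `r.m - q.m = (r.x - q.x) * u`, so the equation says that
`r.x - q.x = 1 / (κ * u + c)`: the direction of `r` is determined by the point where it meets `q`
through a fractional linear map. -/
noncomputable def regulus {K : Type*} [Field K] (𝒜 : Finset (ConicLine K)) (q : ConicLine K)
    (κ c : K) : Finset (ConicLine K) :=
  {r ∈ meeting 𝒜 q | κ * (r.m - q.m) + c * (r.x - q.x) = 1}

/-- The hypotheses on two families of lines under which their incidences are counted: the lines of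
`𝒜` are pairwise disjoint, have no direction in common with the lines of `ℬ`, and at most `k` of
them lie in a common regulus through a line of `ℬ`. -/
structure Admissible {K : Type*} [Field K] (k : ℕ) (𝒜 ℬ : Finset (ConicLine K)) : Prop where
  skew : Skew 𝒜
  x_ne : ∀ r ∈ 𝒜, ∀ q ∈ ℬ, r.x ≠ q.x
  card_regulus_le : ∀ q ∈ ℬ, ∀ κ c, #(regulus 𝒜 q κ c) ≤ k

variable {K : Type*} [Field K] {q r : ConicLine K} {P F : MvPolynomial (Fin 3) K}
  {𝒜 ℬ : Finset (ConicLine K)} {k : ℕ}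

lemma mem_meeting : r ∈ meeting 𝒜 q ↔ r ∈ 𝒜 ∧ r.Meets q := by
  simp [meeting]

lemma mem_regulus {κ c : K} :
    r ∈ regulus 𝒜 q κ c ↔ r ∈ meeting 𝒜 q ∧ κ * (r.m - q.m) + c * (r.x - q.x) = 1 := by
  simp [regulus]

lemma meeting_subset (𝒜 : Finset (ConicLine K)) (q : ConicLine K) : meeting 𝒜 q ⊆ 𝒜 :=
  fun _ hr => (mem_meeting.mp hr).1

lemma meeting_mono {𝒜' : Finset (ConicLine K)} (h : 𝒜' ⊆ 𝒜) (q : ConicLine K) :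
    meeting 𝒜' q ⊆ meeting 𝒜 q :=
  fun _ hr => mem_meeting.mpr ((mem_meeting.mp hr).imp_left fun hr => h hr)

lemma Admissible.mono {𝒜' ℬ' : Finset (ConicLine K)} (h : Admissible k 𝒜 ℬ) (h𝒜 : 𝒜' ⊆ 𝒜)
    (hℬ : ℬ' ⊆ ℬ) : Admissible k 𝒜' ℬ' where
  skew := h.skew.mono h𝒜
  x_ne r hr q hq := h.x_ne r (h𝒜 hr) q (hℬ hq)
  card_regulus_le q hq κ c :=
    (card_le_card fun _ hr => mem_regulus.mpr
      ((mem_regulus.mp hr).imp_left fun hr => meeting_mono h𝒜 q hr)).trans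
        (h.card_regulus_le q (hℬ hq) κ c)

lemma Skew.card_le_totalDegree (h𝒜 : Skew 𝒜) (hF : q.restrict F ≠ 0)
    (h : ∀ r ∈ 𝒜, ∃ u, r.point u = q.point u ∧ (q.restrict F).eval u = 0) :
    #𝒜 ≤ F.totalDegree :=
  (h𝒜.card_le_natDegree hF h).trans (natDegree_restrict_le q F)

lemma Skew.card_meeting_le_totalDegree (h𝒜 : Skew 𝒜) (hP : ∀ r ∈ 𝒜, r.restrict P = 0)
    (hq : q.restrict P ≠ 0) : #(meeting 𝒜 q) ≤ P.totalDegree := by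
  refine (h𝒜.mono (meeting_subset 𝒜 q)).card_le_totalDegree hq fun r hr => ?_
  obtain ⟨hr𝒜, u, hu⟩ := mem_meeting.mp hr
  exact ⟨u, hu, by rw [eval_restrict, ← hu, ← eval_restrict, hP r hr𝒜, Polynomial.eval_zero]⟩

open scoped Classical in
lemma card_filter_restrict_eq_zero_le (hP : Prime P) (hPF : ¬ P ∣ F)
    (ℬ : Finset (ConicLine K)) :
    #{q ∈ ℬ | q.restrict P = 0 ∧ q.restrict F = 0} ≤ P.totalDegree * F.totalDegree :=
  card_le_totalDegree_mul_totalDegree hP hPF (fun _ hq => (mem_filter.mp hq).2.1)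
    fun _ hq => (mem_filter.mp hq).2.2

lemma eval_tanDeriv_eq_mul {u : K} (hr : r.restrict P = 0) (hq : q.restrict P = 0)
    (hu : r.point u = q.point u) (hx : r.x ≠ q.x) :
    (q.restrict (tanDeriv q.x P)).eval u = (r.x - q.x) * (q.restrict (pderiv 2 P)).eval u := by
  have hr₁ : eval (q.point u) (dirDeriv r.x P) = 0 := by
    rw [← hu, ← eval_restrict, restrict_dirDeriv_eq_zero hr, Polynomial.eval_zero]
  have hq₁ : eval (q.point u) (dirDeriv q.x P) = 0 := by
    rw [← eval_restrict, restrict_dirDeriv_eq_zero hq, Polynomial.eval_zero]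
  simp only [dirDeriv_eq_add q.x r.x, map_add, map_sub, map_mul, map_pow, eval_C, hq₁] at hr₁
  rw [eval_restrict, eval_restrict]
  refine mul_left_cancel₀ (sub_ne_zero.mpr hx) ?_
  linear_combination -hr₁

lemma eval_pderiv_two_ne_zero {u : K} {i : Fin 3} (hr : r.restrict P = 0)
    (hq : q.restrict P = 0) (hu : r.point u = q.point u) (hx : r.x ≠ q.x)
    (hi : (q.restrict (pderiv i P)).eval u ≠ 0) : (q.restrict (pderiv 2 P)).eval u ≠ 0 := by
  intro h₂
  have hT := eval_tanDeriv_eq_mul hr hq hu hx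
  have hD : (q.restrict (dirDeriv q.x P)).eval u = 0 := by
    rw [restrict_dirDeriv_eq_zero hq, Polynomial.eval_zero]
  simp only [dirDeriv_apply, tanDeriv_apply, map_add, map_sub, map_mul, restrict_C,
    Polynomial.eval_add, Polynomial.eval_sub, Polynomial.eval_mul, h₂, mul_zero, sub_zero,
    add_zero] at hT hD
  rw [hT, mul_zero, sub_zero] at hD
  fin_cases i
  exacts [hi hD, hi hT, hi h₂]

open scoped Classical in
lemma card_filter_eval_pderiv_ne_zero_le {p : ℕ} [CharP K p] (h : Admissible k 𝒜 ℬ)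
    (hP : ∀ r ∈ 𝒜, r.restrict P = 0) (hd : 2 * P.totalDegree + 1 < p)
    (hconst : P ∣ remConst P) (hlin : P ∣ remLin P) (hqℬ : q ∈ ℬ) (hq : q.restrict P = 0)
    (i : Fin 3) :
    #{r ∈ 𝒜 | ∃ u, r.point u = q.point u ∧ (q.restrict (pderiv i P)).eval u ≠ 0} ≤ k := by
  rcases eq_empty_or_nonempty
    {r ∈ 𝒜 | ∃ u, r.point u = q.point u ∧ (q.restrict (pderiv i P)).eval u ≠ 0}
    with hempty | ⟨r₀, hr₀⟩
  · rw [hempty, card_empty]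
    exact Nat.zero_le k
  obtain ⟨hr₀𝒜, u₀, hu₀, hi₀⟩ := mem_filter.mp hr₀
  have hx₀ := h.x_ne r₀ hr₀𝒜 q hqℬ
  have hG₀ := eval_pderiv_two_ne_zero (hP r₀ hr₀𝒜) hq hu₀ hx₀ hi₀
  have hT₀ : (q.restrict (tanDeriv q.x P)).eval u₀ ≠ 0 := by
    rw [eval_tanDeriv_eq_mul (hP r₀ hr₀𝒜) hq hu₀ hx₀]
    exact mul_ne_zero (sub_ne_zero.mpr hx₀) hG₀
  obtain ⟨κ, c, hκ⟩ := exists_restrict_pderiv_eq_linear_mul hd hq hconst hlin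
    (fun h₀ => hG₀ (by rw [h₀, Polynomial.eval_zero]))
    (fun h₀ => hT₀ (by rw [h₀, Polynomial.eval_zero]))
  refine (card_le_card fun r hr => ?_).trans (h.card_regulus_le q hqℬ κ c)
  obtain ⟨hr𝒜, u, hu, hi⟩ := mem_filter.mp hr
  have hx := h.x_ne r hr𝒜 q hqℬ
  have hG := eval_pderiv_two_ne_zero (hP r hr𝒜) hq hu hx hi
  have hlinear : (κ * u + c) * (r.x - q.x) = 1 := by
    have hev := congrArg (Polynomial.eval u) hκ
    rw [Polynomial.eval_mul, eval_tanDeriv_eq_mul (hP r hr𝒜) hq hu hx] at hev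
    simp only [Polynomial.eval_add, Polynomial.eval_mul, Polynomial.eval_C,
      Polynomial.eval_X] at hev
    exact mul_right_cancel₀ hG (by linear_combination -hev)
  have hm : r.m - r.x * u = q.m - q.x * u := congrFun hu 1
  exact mem_regulus.mpr ⟨mem_meeting.mpr ⟨hr𝒜, u, hu⟩, by linear_combination hlinear + κ * hm⟩

lemma card_meeting_le_of_dvd {p : ℕ} [CharP K p] (h : Admissible k 𝒜 ℬ)
    (hP : ∀ r ∈ 𝒜, r.restrict P = 0) (hd : 2 * P.totalDegree + 1 < p)
    (hconst : P ∣ remConst P) (hlin : P ∣ remLin P) (hqℬ : q ∈ ℬ) (hq : q.restrict P = 0)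
    {i : Fin 3} (hi : q.restrict (pderiv i P) ≠ 0) :
    #(meeting 𝒜 q) ≤ P.totalDegree + k := by
  classical
  have hsub : meeting 𝒜 q ⊆
      {r ∈ 𝒜 | ∃ u, r.point u = q.point u ∧ (q.restrict (pderiv i P)).eval u = 0} ∪
      {r ∈ 𝒜 | ∃ u, r.point u = q.point u ∧ (q.restrict (pderiv i P)).eval u ≠ 0} := by
    intro r hr
    obtain ⟨hr𝒜, u, hu⟩ := mem_meeting.mp hr
    rw [mem_union, mem_filter, mem_filter]
    rcases eq_or_ne ((q.restrict (pderiv i P)).eval u) 0 with h₀ | h₀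
    · exact Or.inl ⟨hr𝒜, u, hu, h₀⟩
    · exact Or.inr ⟨hr𝒜, u, hu, h₀⟩
  have hsing := (h.skew.mono (filter_subset _ _)).card_le_totalDegree hi fun r hr =>
    (mem_filter.mp hr).2
  refine (card_le_card hsub).trans ((card_union_le _ _).trans (add_le_add ?_ ?_))
  · exact hsing.trans ((totalDegree_pderiv_le i P).trans (Nat.sub_le _ _))
  · exact card_filter_eval_pderiv_ne_zero_le h hP hd hconst hlin hqℬ hq i

lemma card_meeting_le_of_restrict_remConst_or_remLin_ne_zero (h : Admissible k 𝒜 ℬ)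
    (hP : ∀ r ∈ 𝒜, r.restrict P = 0) (hqℬ : q ∈ ℬ) (hq : q.restrict P = 0)
    (hrem : q.restrict (remConst P) ≠ 0 ∨ q.restrict (remLin P) ≠ 0) :
    #(meeting 𝒜 q) ≤ 4 * P.totalDegree := by
  have hmeet : ∀ r ∈ meeting 𝒜 q, ∃ u, r.point u = q.point u ∧
      (q.restrict (remConst P)).eval u = 0 ∧ (q.restrict (remLin P)).eval u = 0 := by
    intro r hr
    obtain ⟨hr𝒜, u, hu⟩ := mem_meeting.mp hr
    exact ⟨u, hu, eval_remConst_remLin_eq_zero (hP r hr𝒜) hq hu (h.x_ne r hr𝒜 q hqℬ)⟩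
  have hskew := h.skew.mono (meeting_subset 𝒜 q)
  obtain ⟨hconst, hlin⟩ := totalDegree_remConst_le_and_remLin_le P
  rcases hrem with h₀ | h₀
  · exact (hskew.card_le_totalDegree h₀ fun r hr =>
      (hmeet r hr).imp fun _ hu => ⟨hu.1, hu.2.1⟩).trans hconst
  · exact (hskew.card_le_totalDegree h₀ fun r hr =>
      (hmeet r hr).imp fun _ hu => ⟨hu.1, hu.2.2⟩).trans hlin

/-- Apart from at most `4 d²` exceptional lines, every line of `ℬ` on the surface `P = 0` of degree
`d` meets at most `4 d + k` lines of `𝒜`. -/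
def SurfaceBound (k : ℕ) (𝒜 ℬ : Finset (ConicLine K)) (P : MvPolynomial (Fin 3) K) : Prop :=
  ∃ bad : Finset (ConicLine K), #bad ≤ 4 * P.totalDegree ^ 2 ∧
    ∀ q ∈ ℬ, q ∉ bad → q.restrict P = 0 → #(meeting 𝒜 q) ≤ 4 * P.totalDegree + k

lemma surfaceBound_of_prime {p : ℕ} [CharP K p] (h : Admissible k 𝒜 ℬ) (hprime : Prime P)
    (hd : 2 * P.totalDegree + 1 < p) (hP : ∀ r ∈ 𝒜, r.restrict P = 0) :
    SurfaceBound k 𝒜 ℬ P := by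
  classical
  have of_not_dvd {F : MvPolynomial (Fin 3) K} (hF : ¬ P ∣ F)
      (hdeg : F.totalDegree ≤ 4 * P.totalDegree) (hmeet : ∀ q ∈ ℬ, q.restrict P = 0 →
        q.restrict F ≠ 0 → #(meeting 𝒜 q) ≤ 4 * P.totalDegree + k) :
      SurfaceBound k 𝒜 ℬ P := by
    refine ⟨{q ∈ ℬ | q.restrict P = 0 ∧ q.restrict F = 0}, ?_, fun q hqℬ hbad hq =>
      hmeet q hqℬ hq fun h₀ => hbad (mem_filter.mpr ⟨hqℬ, hq, h₀⟩)⟩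
    exact (card_filter_restrict_eq_zero_le hprime hF ℬ).trans (by nlinarith)
  obtain ⟨hdconst, hdlin⟩ := totalDegree_remConst_le_and_remLin_le P
  by_cases hconst : P ∣ remConst P
  · by_cases hlin : P ∣ remLin P
    · obtain ⟨i, hi⟩ := exists_not_dvd_pderiv hprime (p := p) (by omega)
      have hdi := totalDegree_pderiv_le i P
      exact of_not_dvd hi (by omega) fun q hqℬ hq h₀ =>
        (card_meeting_le_of_dvd h hP hd hconst hlin hqℬ hq h₀).trans (by omega)
    · exact of_not_dvd hlin hdlin fun q hqℬ hq h₀ =>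
        (card_meeting_le_of_restrict_remConst_or_remLin_ne_zero h hP hqℬ hq (Or.inr h₀)).trans
          (Nat.le_add_right _ _)
  · exact of_not_dvd hconst hdconst fun q hqℬ hq h₀ =>
      (card_meeting_le_of_restrict_remConst_or_remLin_ne_zero h hP hqℬ hq (Or.inl h₀)).trans
        (Nat.le_add_right _ _)

lemma SurfaceBound.mul {Q : MvPolynomial (Fin 3) K} (h𝒜 : Skew 𝒜) (hP : Prime P)
    (hPQ : ¬ P ∣ Q) (hQ : Q ≠ 0) (hvanish : ∀ r ∈ 𝒜, r.restrict (P * Q) = 0)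
    (boundP : ∀ 𝒜' ⊆ 𝒜, (∀ r ∈ 𝒜', r.restrict P = 0) → SurfaceBound k 𝒜' ℬ P)
    (boundQ : ∀ 𝒜' ⊆ 𝒜, (∀ r ∈ 𝒜', r.restrict Q = 0) → SurfaceBound k 𝒜' ℬ Q) :
    SurfaceBound k 𝒜 ℬ (P * Q) := by
  classical
  set 𝒜₁ := {r ∈ 𝒜 | r.restrict P = 0}
  set 𝒜₂ := {r ∈ 𝒜 | ¬ r.restrict P = 0}
  have h₁ : ∀ r ∈ 𝒜₁, r.restrict P = 0 := fun r hr => (mem_filter.mp hr).2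
  have h₂ : ∀ r ∈ 𝒜₂, r.restrict Q = 0 := fun r hr =>
    (mul_eq_zero.mp ((map_mul r.restrict P Q).symm.trans
      (hvanish r (mem_filter.mp hr).1))).resolve_left (mem_filter.mp hr).2
  have hs₁ : 𝒜₁ ⊆ 𝒜 := filter_subset _ _
  have hs₂ : 𝒜₂ ⊆ 𝒜 := filter_subset _ _
  obtain ⟨bad₁, hbad₁, hmeet₁⟩ := boundP 𝒜₁ hs₁ h₁
  obtain ⟨bad₂, hbad₂, hmeet₂⟩ := boundQ 𝒜₂ hs₂ h₂
  have hbad₃ := card_filter_restrict_eq_zero_le hP hPQ ℬ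
  set bad₃ := {q ∈ ℬ | q.restrict P = 0 ∧ q.restrict Q = 0}
  have hsplit (q) : #(meeting 𝒜 q) ≤ #(meeting 𝒜₁ q) + #(meeting 𝒜₂ q) := by
    simp only [meeting, 𝒜₁, 𝒜₂, filter_filter]
    rw [← card_filter_add_card_filter_not (s := {r ∈ 𝒜 | r.Meets q}) (·.restrict P = 0)]
    simp only [filter_filter, and_comm, le_refl]
  rw [SurfaceBound, totalDegree_mul_of_isDomain hP.ne_zero hQ]
  refine ⟨bad₁ ∪ bad₂ ∪ bad₃, ?_, fun q hqℬ hbad hq => (hsplit q).trans ?_⟩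
  · have := card_union_le (bad₁ ∪ bad₂) bad₃
    have := card_union_le bad₁ bad₂
    nlinarith [Nat.zero_le (P.totalDegree * Q.totalDegree)]
  · simp only [mem_union, not_or] at hbad
    have hnot : ¬ (q.restrict P = 0 ∧ q.restrict Q = 0) := fun h₀ =>
      hbad.2 (mem_filter.mpr ⟨hqℬ, h₀⟩)
    rcases mul_eq_zero.mp ((map_mul q.restrict P Q).symm.trans hq) with hqP | hqQ
    · have := hmeet₁ q hqℬ hbad.1.1 hqP
      have := (h𝒜.mono hs₂).card_meeting_le_totalDegree h₂ fun hqQ => hnot ⟨hqP, hqQ⟩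
      omega
    · have := hmeet₂ q hqℬ hbad.1.2 hqQ
      have := (h𝒜.mono hs₁).card_meeting_le_totalDegree h₁ fun hqP => hnot ⟨hqP, hqQ⟩
      omega

lemma surfaceBound {p : ℕ} [CharP K p] (hP₀ : P ≠ 0) (hd : 2 * P.totalDegree + 1 < p)
    (h : Admissible k 𝒜 ℬ) (hP : ∀ r ∈ 𝒜, r.restrict P = 0) : SurfaceBound k 𝒜 ℬ P := by
  induction P using UniqueFactorizationMonoid.induction_on_prime generalizing 𝒜 with
  | h₁ => exact absurd rfl hP₀
  | h₂ P hunit =>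
    exact ⟨∅, by simp, fun q _ _ hq => absurd hq (hunit.map q.restrict).ne_zero⟩
  | h₃ Q P hQ hprime ih =>
    have hdeg := totalDegree_mul_of_isDomain hprime.ne_zero hQ
    by_cases hdvd : P ∣ Q
    · have hzero {q : ConicLine K} (hq : q.restrict (P * Q) = 0) : q.restrict Q = 0 := by
        rcases mul_eq_zero.mp ((map_mul q.restrict P Q).symm.trans hq) with h₀ | h₀
        · exact zero_dvd_iff.mp (h₀ ▸ map_dvd q.restrict hdvd)
        · exact h₀
      obtain ⟨bad, hbad, hmeet⟩ := ih hQ (by omega) h fun r hr => hzero (hP r hr)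
      refine ⟨bad, hbad.trans ?_, fun q hqℬ hqbad hq =>
        (hmeet q hqℬ hqbad (hzero hq)).trans (by omega)⟩
      gcongr
      omega
    · exact .mul h.skew hprime hdvd hQ hP
        (fun 𝒜' h𝒜' => surfaceBound_of_prime (h.mono h𝒜' subset_rfl) hprime (by omega))
        fun 𝒜' h𝒜' => ih hQ (by omega) (h.mono h𝒜' subset_rfl)

end ConicLine

end PolynomialMethod

/-! ### The number of incidences of an admissible pair of families -/

section Sampling

variable {α ι : Type*} [DecidableEq α]

/-- Let each element of `A` be kept independently with probability `ρ`, giving a random set `T`.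
This is the expectation of `∑ q ∈ Q, (#(T ∩ S q) - x q) ^ 2 + v * #T`. -/
noncomputable def expectedCost (Q : Finset ι) (S : ι → Finset α) (v ρ : ℝ) (A : Finset α)
    (x : ι → ℝ) : ℝ :=
  ∑ q ∈ Q, ((ρ * #(A ∩ S q) - x q) ^ 2 + ρ * (1 - ρ) * #(A ∩ S q)) + v * ρ * #A

lemma expectedCost_insert (Q : Finset ι) (S : ι → Finset α) (v ρ : ℝ) {a : α} {A : Finset α}
    (ha : a ∉ A) (x : ι → ℝ) :
    expectedCost Q S v ρ (insert a A) x =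
      ρ * (expectedCost Q S v ρ A (fun q => x q - if a ∈ S q then 1 else 0) + v) +
        (1 - ρ) * expectedCost Q S v ρ A x := by
  have hcard (q : ι) :
      (#(insert a A ∩ S q) : ℝ) = #(A ∩ S q) + if a ∈ S q then 1 else 0 := by
    split_ifs with h
    · rw [insert_inter_of_mem h, card_insert_of_notMem (by simp [ha]), Nat.cast_succ]
    · rw [insert_inter_of_notMem h, add_zero]
  have hterm (q : ι) :
      (ρ * #(insert a A ∩ S q) - x q) ^ 2 + ρ * (1 - ρ) * #(insert a A ∩ S q) =
        ρ * ((ρ * #(A ∩ S q) - (x q - if a ∈ S q then 1 else 0)) ^ 2 +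
          ρ * (1 - ρ) * #(A ∩ S q)) +
        (1 - ρ) * ((ρ * #(A ∩ S q) - x q) ^ 2 + ρ * (1 - ρ) * #(A ∩ S q)) := by
    rw [hcard]
    split_ifs <;> ring
  simp only [expectedCost, hterm, sum_add_distrib, ← mul_sum, card_insert_of_notMem ha,
    Nat.cast_succ]
  ring

lemma exists_subset_expectedCost_one_le (Q : Finset ι) (S : ι → Finset α) (v : ℝ) {ρ : ℝ}
    (hρ₀ : 0 ≤ ρ) (hρ₁ : ρ ≤ 1) (A : Finset α) (x : ι → ℝ) :
    ∃ T ⊆ A, expectedCost Q S v 1 T x ≤ expectedCost Q S v ρ A x := by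
  induction A using Finset.induction_on generalizing x with
  | empty => exact ⟨∅, subset_rfl, by simp [expectedCost]⟩
  | insert a A ha ih =>
    obtain ⟨T, hT, hcost⟩ := ih x
    obtain ⟨T', hT', hcost'⟩ := ih fun q => x q - if a ∈ S q then 1 else 0
    rw [expectedCost_insert Q S v ρ ha]
    rcases le_total (expectedCost Q S v ρ A x)
      (expectedCost Q S v ρ A (fun q => x q - if a ∈ S q then 1 else 0) + v) with h | h
    · exact ⟨T, hT.trans (subset_insert _ _), by nlinarith⟩
    · refine ⟨insert a T', insert_subset_insert _ hT', ?_⟩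
      rw [expectedCost_insert Q S v 1 fun haT' => ha (hT' haT')]
      nlinarith

lemma exists_subset_card_le_and_sum_sq_le {Q : Finset ι} {S : ι → Finset α} {A : Finset α}
    {ρ : ℝ} {D : ℕ} (hρ₀ : 0 ≤ ρ) (hρ₁ : ρ ≤ 1) (hSA : ∀ q ∈ Q, S q ⊆ A)
    (hD : ∀ q ∈ Q, #(S q) = D) :
    ∃ T ⊆ A, #T ≤ 2 * ρ * #A ∧ ∑ q ∈ Q, (#(T ∩ S q) - ρ * D) ^ 2 ≤ 2 * ρ * (#Q * D) := by
  rcases (Nat.zero_le (#Q * D)).eq_or_lt with hQD | hQD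
  · refine ⟨∅, empty_subset _, ?_, ?_⟩
    · rw [card_empty, Nat.cast_zero]; positivity
    rcases mul_eq_zero.mp hQD.symm with hQ | rfl
    · simp [card_eq_zero.mp hQ]
    · simp
  have hA : 0 < #A := by
    obtain ⟨q, hq⟩ := card_pos.mp (Nat.pos_of_mul_pos_right hQD)
    exact (Nat.pos_of_mul_pos_left hQD).trans_le (hD q hq ▸ card_le_card (hSA q hq))
  have hQD' : (0 : ℝ) < #Q * D := by exact_mod_cast hQD
  obtain ⟨T, hT, hcost⟩ := exists_subset_expectedCost_one_le Q S (#Q * D / #A) hρ₀ hρ₁ A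
    fun _ => ρ * D
  have hterm : ∀ q ∈ Q, (ρ * #(A ∩ S q) - ρ * D) ^ 2 + ρ * (1 - ρ) * #(A ∩ S q) =
      ρ * (1 - ρ) * D := fun q hq => by
    rw [inter_eq_right.mpr (hSA q hq), hD q hq]; ring
  have hv : #Q * D / #A * ρ * #A = ρ * (#Q * D) := by field_simp
  simp only [expectedCost, sum_congr rfl hterm, sum_const, nsmul_eq_mul, hv, one_mul, sub_self,
    zero_mul, add_zero, mul_one] at hcost
  have hρD : 0 ≤ ρ * ρ * (#Q * D) := by positivity
  have hsum : 0 ≤ ∑ q ∈ Q, (#(T ∩ S q) - ρ * D) ^ 2 := sum_nonneg fun _ _ => sq_nonneg _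
  have hTA : 0 ≤ #Q * D / #A * (#T : ℝ) := by positivity
  refine ⟨T, hT, ?_, by linarith⟩
  refine le_of_mul_le_mul_left (a := (#Q * D / #A : ℝ)) ?_ (by positivity)
  calc #Q * D / #A * (#T : ℝ) ≤ 2 * (ρ * (#Q * D)) := by linarith
    _ = #Q * D / #A * (2 * ρ * #A) := by field_simp

lemma exists_subset_card_le_and_card_filter_le {Q : Finset ι} {S : ι → Finset α} {A : Finset α}
    {ρ : ℝ} {D : ℕ} (hρ₀ : 0 < ρ) (hρ₁ : ρ ≤ 1) (hD₀ : 0 < D) (hSA : ∀ q ∈ Q, S q ⊆ A)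
    (hD : ∀ q ∈ Q, D ≤ #(S q)) :
    ∃ T ⊆ A, #T ≤ 2 * ρ * #A ∧ ρ * D * #{q ∈ Q | 2 * #(T ∩ S q) ≤ ρ * D} ≤ 8 * #Q := by
  choose! S' hS' hcard using fun q hq => exists_subset_card_eq (hD q hq)
  obtain ⟨T, hT, hTA, hsum⟩ := exists_subset_card_le_and_sum_sq_le hρ₀.le hρ₁
    (fun q hq => (hS' q hq).trans (hSA q hq)) hcard
  refine ⟨T, hT, hTA, ?_⟩
  set poor := {q ∈ Q | 2 * (#(T ∩ S q) : ℝ) ≤ ρ * D}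
  have hρD : 0 < ρ * D := by positivity
  have hpoor : #poor * (ρ * D / 2) ^ 2 ≤ 2 * ρ * (#Q * D) := by
    rw [← nsmul_eq_mul]
    refine (card_nsmul_le_sum poor (fun q => (#(T ∩ S' q) - ρ * D) ^ 2) _ fun q hq => ?_).trans
      ((sum_le_sum_of_subset_of_nonneg (filter_subset _ _) fun _ _ _ => sq_nonneg _).trans hsum)
    obtain ⟨hqQ, hq⟩ := mem_filter.mp hq
    have hle : (#(T ∩ S' q) : ℝ) ≤ #(T ∩ S q) := by
      exact_mod_cast card_le_card (inter_subset_inter_left (hS' q hqQ))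
    rw [sub_sq_comm]
    exact pow_le_pow_left₀ (by positivity) (by linarith) 2
  refine le_of_mul_le_mul_left (a := ρ * D) ?_ hρD
  linarith

end Sampling

namespace ConicLine

variable {K : Type*} [Field K] {k N : ℕ} {𝒜 ℬ : Finset (ConicLine K)}

lemma sum_card_meeting_comm (𝒜 ℬ : Finset (ConicLine K)) :
    ∑ q ∈ ℬ, #(meeting 𝒜 q) = ∑ r ∈ 𝒜, #(meeting ℬ r) := by
  simp only [card_eq_sum_ones]
  refine sum_comm' fun q r => ?_
  rw [mem_meeting, mem_meeting]
  exact ⟨fun h => ⟨⟨h.1, h.2.2.symm⟩, h.2.1⟩, fun h => ⟨h.1.1, h.2, h.1.2.symm⟩⟩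

lemma exists_subset_card_filter_card_meeting_le {D : ℕ} (hD : 0 < D)
    (hrich : ∀ q ∈ ℬ, D ≤ #(meeting 𝒜 q)) :
    ∃ T ⊆ 𝒜, 100 * #T ≤ #𝒜 ∧ D * #{q ∈ ℬ | 400 * #(meeting T q) ≤ D} ≤ 1600 * #ℬ := by
  classical
  obtain ⟨T, hT, hTcard, hpoor⟩ := exists_subset_card_le_and_card_filter_le (ρ := 1 / 200)
    (by norm_num) (by norm_num) hD (fun q _ => meeting_subset 𝒜 q) hrich
  have hmeeting (q) : T ∩ meeting 𝒜 q = meeting T q := by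
    ext r
    rw [mem_inter, mem_meeting, mem_meeting]
    exact ⟨fun h => ⟨h.1, h.2.2⟩, fun h => ⟨h.1, hT h.1, h.2⟩⟩
  have hiff (q) : 2 * (#(meeting T q) : ℝ) ≤ 1 / 200 * D ↔ 400 * #(meeting T q) ≤ D := by
    rw [← Nat.cast_le (α := ℝ), Nat.cast_mul, Nat.cast_ofNat]
    constructor <;> intro h <;> linarith
  simp only [hmeeting, hiff] at hpoor
  refine ⟨T, hT, ?_, ?_⟩ <;> rw [← Nat.cast_le (α := ℝ)] <;> push_cast <;> linarith

variable {p : ℕ} [CharP K p]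

lemma exists_card_meeting_le {d : ℕ} (h : Admissible k 𝒜 ℬ) (hd : 6 * #𝒜 < (d + 2) * (d + 3))
    (hp : 2 * d + 1 < p) :
    ∃ bad : Finset (ConicLine K), #bad ≤ 4 * d ^ 2 ∧
      ∀ q ∈ ℬ, q ∉ bad → #(meeting 𝒜 q) ≤ 4 * d + k := by
  obtain ⟨P, hP₀, hPd, hP⟩ := exists_restrict_eq_zero_of_card_lt hd
  obtain ⟨bad, hbad, hmeet⟩ := surfaceBound hP₀ (p := p) (by omega) h hP
  refine ⟨bad, hbad.trans (by gcongr), fun q hqℬ hqbad => ?_⟩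
  by_cases hq : q.restrict P = 0
  · exact (hmeet q hqℬ hqbad hq).trans (by omega)
  · exact (h.skew.card_meeting_le_totalDegree hP hq).trans (by omega)

lemma exists_card_meeting_lt (hN : N ≤ p ^ 2) (h : Admissible k 𝒜 ℬ) (h𝒜 : #𝒜 ≤ N)
    (h𝒜ℬ : #𝒜 ≤ #ℬ) (hℬ : ℬ.Nonempty) :
    ∃ q ∈ ℬ, #(meeting 𝒜 q) < 10000 * (Nat.sqrt N + k + 1) := by
  classical
  by_contra! hrich
  generalize hD : 10000 * (Nat.sqrt N + k + 1) = D at hrich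
  obtain ⟨T, hT, hTcard, hpoor⟩ := exists_subset_card_filter_card_meeting_le (by omega) hrich
  set d := Nat.sqrt (6 * #T)
  have hd₁ : d ^ 2 ≤ 6 * #T := Nat.sqrt_le' _
  have hd₂ : 6 * #T < (d + 1) ^ 2 := Nat.lt_succ_sqrt' _
  have hdN : 4 * d ≤ Nat.sqrt N := Nat.le_sqrt'.mpr (by rw [mul_pow]; omega)
  have hdp : Nat.sqrt N ≤ p := (Nat.sqrt_le_sqrt hN).trans_eq (Nat.sqrt_eq' p)
  have hp₀ : p ≠ 0 := by
    rintro rfl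
    obtain ⟨q, hq⟩ := hℬ
    have := (hrich q hq).trans (card_le_card (meeting_subset 𝒜 q))
    omega
  have hp₁ : p ≠ 1 := CharP.char_ne_one K p
  obtain ⟨bad, hbad, hmeet⟩ := exists_card_meeting_le (h.mono hT subset_rfl) (d := d)
    (by nlinarith) (p := p) (by omega)
  set poor := {q ∈ ℬ | 400 * #(meeting T q) ≤ D}
  have hcover : ℬ ⊆ bad ∪ poor := by
    intro q hq
    rw [mem_union, or_iff_not_imp_left]
    intro hqbad
    have := hmeet q hq hqbad
    exact mem_filter.mpr ⟨hq, by omega⟩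
  have hpoor' : 10000 * #poor ≤ D * #poor := Nat.mul_le_mul_right _ (by omega)
  have := (card_le_card hcover).trans (card_union_le _ _)
  have := hℬ.card_pos
  omega

theorem sum_card_meeting_le (hN : N ≤ p ^ 2) (h : Admissible k 𝒜 ℬ) (h' : Admissible k ℬ 𝒜)
    (h𝒜 : #𝒜 ≤ N) (hℬ : #ℬ ≤ N) :
    ∑ q ∈ ℬ, #(meeting 𝒜 q) ≤ 10000 * (Nat.sqrt N + k + 1) * (#𝒜 + #ℬ) := by
  classical
  induction hn : #𝒜 + #ℬ generalizing 𝒜 ℬ with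
  | zero => simp [card_eq_zero.mp (by omega : #ℬ = 0)]
  | succ n ih =>
    wlog h𝒜ℬ : #𝒜 ≤ #ℬ generalizing 𝒜 ℬ
    · rw [sum_card_meeting_comm]
      exact this h' h hℬ h𝒜 (by omega) (by omega)
    obtain ⟨q, hq, hmeet⟩ := exists_card_meeting_lt hN h h𝒜 h𝒜ℬ (card_pos.mp (by omega))
    have hsub := erase_subset q ℬ
    have hcard := card_erase_add_one hq
    have := ih (h.mono subset_rfl hsub) (h'.mono hsub subset_rfl) h𝒜 (by omega) (by omega)
    rw [← sum_erase_add _ _ hq, mul_add, mul_one]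
    omega

end ConicLine

/-! ### Incidences of a family with itself -/

open RatFunc in
lemma eq_zero_of_quadratic_ratFunc_X_eq_zero {K : Type*} [Field K] {a b c : K}
    (h : (C a : RatFunc K) + C b * X + C c * X ^ 2 = 0) : a = 0 ∧ b = 0 ∧ c = 0 := by
  have hpoly : Polynomial.C a + Polynomial.C b * Polynomial.X +
      Polynomial.C c * Polynomial.X ^ 2 = 0 := by
    refine (map_eq_zero_iff _ (algebraMap_injective K)).mp ?_
    simpa [algebraMap_C, algebraMap_X] using h
  refine ⟨?_, ?_, ?_⟩
  · simpa [Polynomial.coeff_X] using congrArg (Polynomial.coeff · 0) hpoly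
  · simpa [Polynomial.coeff_X, Polynomial.coeff_C] using congrArg (Polynomial.coeff · 1) hpoly
  · simpa [Polynomial.coeff_X, Polynomial.coeff_C] using congrArg (Polynomial.coeff · 2) hpoly

namespace ConicLine

variable {K : Type*} [Field K] {k : ℕ}

lemma card_regulus_le [DecidableEq K] {𝒜 : Finset (ConicLine K)} (hx : #(𝒜.image x) ≤ k)
    (hm : #(𝒜.image m) ≤ k) (q : ConicLine K) (κ c : K) : #(regulus 𝒜 q κ c) ≤ k := by
  have mem_image (f : ConicLine K → K) : Set.MapsTo f (regulus 𝒜 q κ c) (𝒜.image f) := fun r hr =>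
    mem_image_of_mem f (meeting_subset 𝒜 q (mem_regulus.mp hr).1)
  have rel {r} (hr : r ∈ regulus 𝒜 q κ c) : r.m * q.x + r.b = q.m * r.x + q.b :=
    (mem_meeting.mp (mem_regulus.mp hr).1).2.rel
  rcases eq_or_ne κ 0 with rfl | hκ
  · refine (card_le_card_of_injOn m (mem_image m) fun r hr r' hr' hrr' => ?_).trans hm
    have hc := (mem_regulus.mp hr).2
    have hc' := (mem_regulus.mp hr').2
    have hc₀ : c ≠ 0 := by rintro rfl; simp at hc
    have hxx : r.x = r'.x := mul_left_cancel₀ hc₀ (by linear_combination hc - hc')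
    ext
    exacts [hxx, hrr', by linear_combination rel hr - rel hr' - q.x * hrr' + q.m * hxx]
  · refine (card_le_card_of_injOn x (mem_image x) fun r hr r' hr' hrr' => ?_).trans hx
    have hmm : r.m = r'.m := mul_left_cancel₀ hκ (by
      linear_combination (mem_regulus.mp hr).2 - (mem_regulus.mp hr').2 - c * hrr')
    ext
    exacts [hrr', hmm, by linear_combination rel hr - rel hr' - q.x * hmm + q.m * hrr']

section Deformation

open RatFunc

/-- One of two deformations of a line by an indeterminate `τ`. The lines of a deformed family no
longer meet each other, while `shiftLine v` meets `scaleLine w` if and only if `v` and `w` satisfy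
the relation `v.m * w.x + v.b = w.m * v.x + w.b`. -/
noncomputable def shiftLine (v : ConicLine K) : ConicLine (RatFunc K) where
  x := C v.x + X
  m := C v.m * X
  b := C v.b

/-- The second of the two deformations; see `shiftLine`. -/
noncomputable def scaleLine (v : ConicLine K) : ConicLine (RatFunc K) where
  x := C v.x / X
  m := C v.m
  b := C v.b - C v.m * X

variable {v w : ConicLine K}

lemma eq_of_shiftLine_meets (hm : v.m ≠ 0) (h : v.shiftLine.Meets w.shiftLine) : v = w := by
  have hrel : C v.m * X * (C w.x + X) + C v.b = C w.m * X * (C v.x + X) + C w.b := h.rel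
  obtain ⟨hb, hx, hmm⟩ := eq_zero_of_quadratic_ratFunc_X_eq_zero
    (a := v.b - w.b) (b := v.m * w.x - w.m * v.x) (c := v.m - w.m)
    (by simp only [map_sub, map_mul]; linear_combination hrel)
  ext
  exacts [mul_left_cancel₀ hm (by linear_combination -hx + v.x * hmm), sub_eq_zero.mp hmm,
    sub_eq_zero.mp hb]

lemma eq_of_scaleLine_meets (hm : v.m ≠ 0) (h : v.scaleLine.Meets w.scaleLine) : v = w := by
  have hrel : C v.m * (C w.x / X) + (C v.b - C v.m * X) =
      C w.m * (C v.x / X) + (C w.b - C w.m * X) := h.rel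
  have hX : (X : RatFunc K) ≠ 0 := X_ne_zero
  field_simp at hrel
  obtain ⟨hx, hb, hmm⟩ := eq_zero_of_quadratic_ratFunc_X_eq_zero
    (a := v.m * w.x - w.m * v.x) (b := v.b - w.b) (c := w.m - v.m)
    (by simp only [map_sub, map_mul]; linear_combination hrel)
  ext
  exacts [mul_left_cancel₀ hm (by linear_combination -hx - v.x * hmm), (sub_eq_zero.mp hmm).symm,
    sub_eq_zero.mp hb]

lemma shiftLine_x_ne_scaleLine_x (v w : ConicLine K) : v.shiftLine.x ≠ w.scaleLine.x := by
  intro h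
  have hx : (C v.x + X) * X = C w.x := (eq_div_iff X_ne_zero).mp h
  refine one_ne_zero (eq_zero_of_quadratic_ratFunc_X_eq_zero (a := -w.x) (b := v.x) (c := (1 : K))
    ?_).2.2
  simp only [map_neg, map_one]
  linear_combination hx

lemma shiftLine_meets_scaleLine (h : v.m * w.x + v.b = w.m * v.x + w.b) :
    v.shiftLine.Meets w.scaleLine := by
  refine meets_of_rel (shiftLine_x_ne_scaleLine_x v w) ?_
  have hC := congrArg (C : K →+* RatFunc K) h
  simp only [map_add, map_mul] at hC
  change C v.m * X * (C w.x / X) + C v.b = C w.m * (C v.x + X) + (C w.b - C w.m * X)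
  rw [mul_assoc, mul_div_cancel₀ _ X_ne_zero]
  linear_combination hC

end Deformation

open scoped Classical in
lemma admissible_image {ι β : Type*} {F : Finset ι} {s t : ι → β} {ℬ : Finset (ConicLine K)}
    {φ : ι → ConicLine K} {f g : β → K} (hf : ∀ v, (φ v).x = f (s v))
    (hg : ∀ v, (φ v).m = g (t v)) (hs : #(F.image s) ≤ k) (ht : #(F.image t) ≤ k)
    (hskew : ∀ v ∈ F, ∀ w ∈ F, (φ v).Meets (φ w) → v = w)
    (hne : ∀ v ∈ F, ∀ q ∈ ℬ, (φ v).x ≠ q.x) : Admissible k (F.image φ) ℬ where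
  skew := by
    simpa only [Skew, forall_mem_image] using fun v hv w hw h => congrArg φ (hskew v hv w hw h)
  x_ne := by simpa only [forall_mem_image] using hne
  card_regulus_le q _ κ c := by
    refine card_regulus_le ?_ ?_ q κ c
    · have himage : (F.image φ).image x = (F.image s).image f := by
        simp only [image_image, Function.comp_def, hf]
      exact himage ▸ card_image_le.trans hs
    · have himage : (F.image φ).image m = (F.image t).image g := by
        simp only [image_image, Function.comp_def, hg]
      exact himage ▸ card_image_le.trans ht

variable [DecidableEq K] {F : Finset (ConicLine K)}

open scoped Classical in
lemma card_filter_rel_le_sum_card_meeting (hm : ∀ v ∈ F, v.m ≠ 0) :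
    #{z ∈ F ×ˢ F | z.1.m * z.2.x + z.1.b = z.2.m * z.1.x + z.2.b} ≤
      ∑ q ∈ F.image scaleLine, #(meeting (F.image shiftLine) q) := by
  rw [← card_sigma]
  refine card_le_card_of_injOn (fun z => ⟨z.2.scaleLine, z.1.shiftLine⟩) ?_ ?_
  · intro z hz
    obtain ⟨hzF, hrel⟩ := mem_filter.mp hz
    obtain ⟨h₁, h₂⟩ := mem_product.mp hzF
    exact mem_sigma.mpr ⟨mem_image_of_mem _ h₂, mem_meeting.mpr
      ⟨mem_image_of_mem _ h₁, shiftLine_meets_scaleLine hrel⟩⟩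
  · intro z hz z' _ heq
    obtain ⟨h₁, h₂⟩ := mem_product.mp (mem_filter.mp hz).1
    obtain ⟨hscale, hshift⟩ := Sigma.mk.inj_iff.mp heq
    exact Prod.ext (eq_of_shiftLine_meets (hm _ h₁) (eq_of_heq hshift ▸ .refl _))
      (eq_of_scaleLine_meets (hm _ h₂) (hscale ▸ .refl _))

theorem card_filter_rel_le {p : ℕ} [CharP K p] (hm : ∀ v ∈ F, v.m ≠ 0)
    (hxk : #(F.image x) ≤ k) (hmk : #(F.image m) ≤ k) (hF : #F ≤ p ^ 2) :
    #{z ∈ F ×ˢ F | z.1.m * z.2.x + z.1.b = z.2.m * z.1.x + z.2.b} ≤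
      10000 * (Nat.sqrt #F + k + 1) * (2 * #F) := by
  classical
  have : CharP (RatFunc K) p := charP_of_injective_algebraMap (algebraMap K (RatFunc K)).injective p
  have hshift : ∀ v ∈ F, ∀ w ∈ F, v.shiftLine.Meets w.shiftLine → v = w :=
    fun v hv w _ => eq_of_shiftLine_meets (hm v hv)
  have hscale : ∀ v ∈ F, ∀ w ∈ F, v.scaleLine.Meets w.scaleLine → v = w :=
    fun v hv w _ => eq_of_scaleLine_meets (hm v hv)
  have admShift : Admissible k (F.image shiftLine) (F.image scaleLine) :=
    admissible_image (f := fun x => .C x + .X) (g := fun m => .C m * .X) (fun _ => rfl)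
      (fun _ => rfl) (by convert hxk) (by convert hmk) hshift
      (by simpa only [forall_mem_image] using fun v _ w _ => shiftLine_x_ne_scaleLine_x v w)
  have admScale : Admissible k (F.image scaleLine) (F.image shiftLine) :=
    admissible_image (f := fun x => .C x / .X) (g := .C) (fun _ => rfl)
      (fun _ => rfl) (by convert hxk) (by convert hmk) hscale
      (by simpa only [forall_mem_image] using fun v _ w _ => (shiftLine_x_ne_scaleLine_x w v).symm)
  have cardShift : #(F.image shiftLine) = #F :=
    card_image_of_injOn fun v hv w hw h => hshift v hv w hw (h ▸ .refl _)
  have cardScale : #(F.image scaleLine) = #F :=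
    card_image_of_injOn fun v hv w hw h => hscale v hv w hw (h ▸ .refl _)
  have hcount := sum_card_meeting_le hF admShift admScale cardShift.le cardScale.le
  rw [cardShift, cardScale, ← two_mul] at hcount
  exact (card_filter_rel_le_sum_card_meeting hm).trans hcount

end ConicLine

/-! ### Sums and values -/

namespace ConicLine

variable {K : Type*} [Field K] [DecidableEq K]

lemma sq_card_filter_mem_le {F : Finset (ConicLine K)}
    (hF : ∀ v ∈ F, ∀ w ∈ F, ⟨w.x, v.m, v.b⟩ ∈ F) (Y : Finset K) :
    #{v ∈ F | v.m * v.x + v.b ∈ Y} ^ 2 ≤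
      #Y * #{z ∈ F ×ˢ F | z.1.m * z.2.x + z.1.b = z.2.m * z.1.x + z.2.b} := by
  set E := {z ∈ F ×ˢ F | z.1.m * z.2.x + z.1.b = z.2.m * z.1.x + z.2.b}
  set fiber : K → Finset (ConicLine K) := fun y => {v ∈ F | v.m * v.x + v.b = y}
  have hfiber (y) : #(fiber y) ^ 2 ≤ #{z ∈ E | z.1.m * z.2.x + z.1.b = y} := by
    rw [sq, ← card_product]
    refine card_le_card_of_injOn
      (fun z => (⟨z.2.x, z.1.m, z.1.b⟩, ⟨z.1.x, z.2.m, z.2.b⟩)) ?_ ?_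
    · intro z hz
      obtain ⟨hz₁, hz₂⟩ := mem_product.mp hz
      obtain ⟨hF₁, hy₁⟩ := mem_filter.mp hz₁
      obtain ⟨hF₂, hy₂⟩ := mem_filter.mp hz₂
      exact mem_filter.mpr ⟨mem_filter.mpr ⟨mem_product.mpr ⟨hF _ hF₁ _ hF₂, hF _ hF₂ _ hF₁⟩,
        hy₁.trans hy₂.symm⟩, hy₁⟩
    · intro z _ w _ hzw
      simp only [Prod.mk.injEq, ConicLine.mk.injEq] at hzw
      obtain ⟨⟨hx₂, hm₁, hb₁⟩, hx₁, hm₂, hb₂⟩ := hzw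
      exact Prod.ext (ConicLine.ext hx₁ hm₁ hb₁) (ConicLine.ext hx₂ hm₂ hb₂)
  calc #{v ∈ F | v.m * v.x + v.b ∈ Y} ^ 2 = (∑ y ∈ Y, #(fiber y)) ^ 2 := by
        rw [← sum_card_fiberwise_eq_card_filter]
    _ ≤ #Y * ∑ y ∈ Y, #(fiber y) ^ 2 := sq_sum_le_card_mul_sum_sq
    _ ≤ #Y * ∑ y ∈ Y, #{z ∈ E | z.1.m * z.2.x + z.1.b = y} := by gcongr; exact hfiber _
    _ ≤ #Y * #E := by
        rw [sum_card_fiberwise_eq_card_filter]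
        exact Nat.mul_le_mul_left _ (card_filter_le _ _)

end ConicLine

section Application

variable {α K : Type*} [Field K] [DecidableEq K]

/-- The lines that encode the values of `f a y = g a * (h a + y)`: if `x = y + c`, then the line
belonging to `(x, a, c)` satisfies `m * x + b = f a y`. -/
def valueLines (g h : α → K) (A : Finset α) (S C : Finset K) : Finset (ConicLine K) :=
  (S ×ˢ A ×ˢ C).image fun z => ⟨z.1, g z.2.1, g z.2.1 * (h z.2.1 - z.2.2)⟩

variable {g h : α → K} {A : Finset α} {B C S : Finset K} {m : ℕ}

lemma card_valueLines_le : #(valueLines g h A S C) ≤ #S * (#A * #C) :=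
  card_image_le.trans_eq (by simp only [card_product])

lemma card_image_x_valueLines_le : #((valueLines g h A S C).image ConicLine.x) ≤ #S := by
  refine card_le_card fun x hx => ?_
  simp only [valueLines, mem_image, mem_product, exists_exists_and_eq_and] at hx
  obtain ⟨z, hz, rfl⟩ := hx
  exact hz.1

lemma card_image_m_valueLines_le : #((valueLines g h A S C).image ConicLine.m) ≤ #A := by
  refine (card_le_card fun x hx => ?_).trans (card_image_le (s := A) (f := g))
  simp only [valueLines, mem_image, mem_product, exists_exists_and_eq_and] at hx
  obtain ⟨z, hz, rfl⟩ := hx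
  exact mem_image_of_mem g hz.2.1

lemma mem_valueLines_of_mem_of_mem {v w : ConicLine K} (hv : v ∈ valueLines g h A S C)
    (hw : w ∈ valueLines g h A S C) : ⟨w.x, v.m, v.b⟩ ∈ valueLines g h A S C := by
  simp only [valueLines, mem_image, mem_product] at hv hw ⊢
  obtain ⟨z, hz, rfl⟩ := hv
  obtain ⟨z', hz', rfl⟩ := hw
  exact ⟨(z'.1, z.2), ⟨hz'.1, hz.2⟩, rfl⟩

lemma card_mul_card_mul_card_le (hg : ∀ a ∈ A, g a ≠ 0) (hm : ∀ t, #{a ∈ A | g a = t} ≤ m) :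
    #A * #B * #C ≤ m * #{v ∈ valueLines g h A (B + C) C |
      v.m * v.x + v.b ∈ image₂ (fun x y => g x * (h x + y)) A B} := by
  classical
  rw [← card_product, ← card_product]
  refine card_le_mul_card_image_of_maps_to (f := fun z =>
    (⟨z.1.2 + z.2, g z.1.1, g z.1.1 * (h z.1.1 - z.2)⟩ : ConicLine K)) ?_ _ fun v _ => ?_
  · intro z hz
    simp only [mem_product] at hz
    obtain ⟨⟨ha, hb⟩, hc⟩ := hz
    refine mem_filter.mpr ⟨mem_image.mpr ⟨(z.1.2 + z.2, z.1.1, z.2), ?_, rfl⟩, ?_⟩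
    · exact mem_product.mpr ⟨add_mem_add hb hc, mem_product.mpr ⟨ha, hc⟩⟩
    · exact mem_image₂.mpr ⟨z.1.1, ha, z.1.2, hb, by ring⟩
  · refine (card_le_card_of_injOn (fun z => z.1.1) (fun z hz => ?_) ?_).trans (hm v.m)
    · obtain ⟨hzABC, rfl⟩ := mem_filter.mp hz
      exact mem_filter.mpr ⟨(mem_product.mp (mem_product.mp hzABC).1).1, rfl⟩
    · rintro ⟨⟨a, b⟩, c⟩ hz ⟨⟨a', b'⟩, c'⟩ hz' (rfl : a = a')
      obtain ⟨hz, hv⟩ := mem_filter.mp hz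
      obtain ⟨-, hv'⟩ := mem_filter.mp hz'
      have ha := hg a (mem_product.mp (mem_product.mp hz).1).1
      obtain ⟨hx, -, hb⟩ := ConicLine.mk.inj (hv.trans hv'.symm)
      have hc : c = c' := by linear_combination -mul_left_cancel₀ ha hb
      have hb : b = b' := by linear_combination hx - hc
      rw [hb, hc]

theorem sq_card_mul_card_mul_card_le {p : ℕ} [CharP K p] (hg : ∀ a ∈ A, g a ≠ 0)
    (hm : ∀ t, #{a ∈ A | g a = t} ≤ m) (hp : #(B + C) * (#A * #C) ≤ p ^ 2) :
    (#A * #B * #C) ^ 2 ≤ m ^ 2 * (#(image₂ (fun x y => g x * (h x + y)) A B) *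
      (20000 * (Nat.sqrt (#(B + C) * (#A * #C)) + (#(B + C) + #A) + 1) *
        (#(B + C) * (#A * #C)))) := by
  set Y := image₂ (fun x y => g x * (h x + y)) A B
  set F := valueLines g h A (B + C) C
  have hF : #F ≤ #(B + C) * (#A * #C) := card_valueLines_le
  have hm₀ : ∀ v ∈ F, v.m ≠ 0 := by
    simp only [F, valueLines, forall_mem_image, mem_product]
    exact fun z hz => hg _ hz.2.1
  have hE := ConicLine.card_filter_rel_le hm₀ (k := #(B + C) + #A)
    (card_image_x_valueLines_le.trans (Nat.le_add_right _ _))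
    (card_image_m_valueLines_le.trans (Nat.le_add_left _ _)) (hF.trans hp)
  have hCS := ConicLine.sq_card_filter_mem_le (F := F)
    (fun v hv w hw => mem_valueLines_of_mem_of_mem hv hw) Y
  calc (#A * #B * #C) ^ 2 ≤ (m * #{v ∈ F | v.m * v.x + v.b ∈ Y}) ^ 2 :=
        Nat.pow_le_pow_left (card_mul_card_mul_card_le hg hm) 2
    _ = m ^ 2 * #{v ∈ F | v.m * v.x + v.b ∈ Y} ^ 2 := mul_pow _ _ _
    _ ≤ m ^ 2 * (#Y * (10000 * (Nat.sqrt #F + (#(B + C) + #A) + 1) * (2 * #F))) := by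
        gcongr; exact hCS.trans (Nat.mul_le_mul_left _ hE)
    _ = m ^ 2 * (#Y * (20000 * (Nat.sqrt #F + (#(B + C) + #A) + 1) * #F)) := by ring
    _ ≤ _ := by gcongr

end Application

/-! ### Passage to real exponents -/

section RealInequalities

variable {a b c m M r s y : ℝ}

lemma rpow_div_pow {x : ℝ} (hx : 0 ≤ x) (k : ℕ) {n : ℕ} (hn : n ≠ 0) :
    (x ^ ((k : ℝ) / n)) ^ n = x ^ k := by
  rw [← Real.rpow_mul_natCast hx, div_mul_cancel₀ _ (Nat.cast_ne_zero.mpr hn), Real.rpow_natCast]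

lemma rpow_mul_rpow_mul_rpow_div_rpow_le (ha : 0 ≤ a) (hb : 0 ≤ b) (hc : 0 ≤ c) (hm : 0 < m)
    (hM : 0 ≤ M) (i j k l : ℕ) {n : ℕ} (hn : n ≠ 0)
    (h : a ^ i * b ^ j * c ^ k ≤ m ^ l * M ^ n) :
    a ^ ((i : ℝ) / n) * b ^ ((j : ℝ) / n) * c ^ ((k : ℝ) / n) / m ^ ((l : ℝ) / n) ≤ M := by
  rw [div_le_iff₀ (by positivity), ← pow_le_pow_iff_left₀ (by positivity) (by positivity) hn]
  simp only [mul_pow, rpow_div_pow, ha, hb, hc, hm.le, hn, ne_eq, not_false_eq_true]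
  rwa [mul_comm (M ^ n)]

lemma min_rpow_le (ha : 0 ≤ a) (hb : 0 ≤ b) (hc : 0 ≤ c) (hm : 0 < m) (hM : 0 ≤ M)
    (h : a * b ^ 4 * c ≤ m ^ 4 * M ^ 5 ∨ b ^ 2 * c ≤ m ^ 2 * M ^ 2 ∨
      a * b ^ 2 * c ≤ m ^ 2 * M ^ 3) :
    min (a ^ ((1 : ℝ) / 5) * b ^ ((4 : ℝ) / 5) * c ^ ((1 : ℝ) / 5) / m ^ ((4 : ℝ) / 5))
      (min (b * c ^ ((1 : ℝ) / 2) / m)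
        (b ^ ((2 : ℝ) / 3) * c ^ ((1 : ℝ) / 3) * a ^ ((1 : ℝ) / 3) / m ^ ((2 : ℝ) / 3))) ≤ M := by
  simp only [min_le_iff]
  refine h.imp (fun h => ?_) (Or.imp (fun h => ?_) (fun h => ?_))
  · simpa using rpow_mul_rpow_mul_rpow_div_rpow_le ha hb hc hm hM 1 4 1 4 (n := 5) (by norm_num)
      (by simpa using h)
  · simpa using rpow_mul_rpow_mul_rpow_div_rpow_le ha hb hc hm hM 0 2 1 2 (n := 2) (by norm_num)
      (by simpa using h)
  · simpa using rpow_mul_rpow_mul_rpow_div_rpow_le hb hc ha hm hM 2 1 1 2 (n := 3) (by norm_num)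
      (by linarith)

lemma mul_sq_mul_le_of_sq_le (ha : 0 < a) (hc : 0 < c) (hM : 1 ≤ M) (hs : 0 ≤ s) (hsM : s ≤ M)
    (hyM : y ≤ M) (hr : 0 ≤ r)
    (h : (a * b * c) ^ 2 ≤ m ^ 2 * (y * (20000 * (r + (s + a) + 1) * (s * (a * c))))) :
    a * b ^ 2 * c ≤ 20000 * (m ^ 2 * M ^ 2) * (r + 2 * M + a) := by
  refine le_of_mul_le_mul_left ?_ (mul_pos ha hc)
  calc a * c * (a * b ^ 2 * c) = (a * b * c) ^ 2 := by ring
    _ ≤ _ := h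
    _ ≤ m ^ 2 * (M * (20000 * (r + (M + a) + M) * (M * (a * c)))) := by gcongr
    _ = _ := by ring

lemma mul_pow_four_mul_le (ha : 0 < a) (hc : 0 < c)
    (hrM : r ^ 2 ≤ M * (a * c)) (h : a * b ^ 2 * c ≤ 60000 * (m ^ 2 * M ^ 2) * r) :
    a * b ^ 4 * c ≤ 60000 ^ 2 * (m ^ 4 * M ^ 5) := by
  refine le_of_mul_le_mul_left ?_ (mul_pos ha hc)
  calc a * c * (a * b ^ 4 * c) = (a * b ^ 2 * c) ^ 2 := by ring
    _ ≤ (60000 * (m ^ 2 * M ^ 2) * r) ^ 2 := by gcongr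
    _ = (60000 * (m ^ 2 * M ^ 2)) ^ 2 * r ^ 2 := by ring
    _ ≤ (60000 * (m ^ 2 * M ^ 2)) ^ 2 * (M * (a * c)) := by gcongr
    _ = _ := by ring

lemma monomial_le_or_le_or_le (ha : 0 < a) (hc : 0 < c) (hM : 0 ≤ M)
    (hrM : r ^ 2 ≤ M * (a * c))
    (h : a * b ^ 2 * c ≤ 20000 * (m ^ 2 * M ^ 2) * (r + 2 * M + a)) :
    a * b ^ 4 * c ≤ m ^ 4 * (1000 * M) ^ 5 ∨ b ^ 2 * c ≤ m ^ 2 * (1000 * M) ^ 2 ∨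
      a * b ^ 2 * c ≤ m ^ 2 * (1000 * M) ^ 3 := by
  have hmM₂ : 0 ≤ m ^ 2 * M ^ 2 := by positivity
  have hmM₃ : 0 ≤ m ^ 2 * M ^ 3 := by positivity
  have hmM₅ : 0 ≤ m ^ 4 * M ^ 5 := by positivity
  obtain hr | ha' | hM' : r + 2 * M + a ≤ 3 * r ∨ r + 2 * M + a ≤ 3 * a ∨
      r + 2 * M + a ≤ 3 * (2 * M) := by grind
  · have := mul_pow_four_mul_le ha hc hrM
      (h.trans ((mul_le_mul_of_nonneg_left hr (by positivity)).trans_eq (by ring)))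
    exact Or.inl (by linarith)
  · have : a * (b ^ 2 * c) ≤ a * (60000 * (m ^ 2 * M ^ 2)) :=
      calc a * (b ^ 2 * c) = a * b ^ 2 * c := by ring
        _ ≤ 20000 * (m ^ 2 * M ^ 2) * (3 * a) := h.trans (by gcongr)
        _ = _ := by ring
    exact Or.inr (Or.inl (by linarith [le_of_mul_le_mul_left this ha]))
  · have : a * b ^ 2 * c ≤ 20000 * (m ^ 2 * M ^ 2) * (3 * (2 * M)) := h.trans (by gcongr)
    exact Or.inr (Or.inr (by linarith))

lemma mul_pow_four_mul_le_pow_five {p : ℝ} (ha : 0 < a) (hb : 0 ≤ b) (hc : 0 < c) (hp : 0 ≤ p)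
    (hap : a ≤ p ^ ((5 : ℝ) / 8)) (hbp : b ≤ p ^ ((5 : ℝ) / 8)) (hcp : c ≤ p ^ ((5 : ℝ) / 8))
    (h : p ^ 2 ≤ s * (a * c)) : a * b ^ 4 * c ≤ s ^ 5 := by
  refine le_of_mul_le_mul_left ?_ (pow_pos (mul_pos ha hc) 5)
  have hp_pow : (p ^ ((5 : ℝ) / 8)) ^ 8 = p ^ 5 := by simpa using rpow_div_pow hp 5 (n := 8)
  set P := p ^ ((5 : ℝ) / 8)
  calc (a * c) ^ 5 * (a * b ^ 4 * c) = a ^ 6 * c ^ 6 * b ^ 4 := by ring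
    _ ≤ P ^ 6 * P ^ 6 * P ^ 4 := by gcongr
    _ = (P ^ 8) ^ 2 := by ring
    _ = (p ^ 2) ^ 5 := by rw [hp_pow]; ring
    _ ≤ (s * (a * c)) ^ 5 := by gcongr
    _ = _ := by ring

end RealInequalities

lemma card_filter_eq_le_mu {p : ℕ} [NeZero p] {g : ZMod p → ZMod p}
    (hg : ∀ x, x ≠ 0 → g x ≠ 0) {A : Finset (ZMod p)} (hA : 0 ∉ A) (t : ZMod p) :
    #{x ∈ A | g x = t} ≤ mu g := by
  have hA₀ {x} (hx : x ∈ A) : x ≠ 0 := ne_of_mem_of_not_mem hx hA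
  obtain rfl | ht := eq_or_ne t 0
  · rw [filter_false_of_mem fun x hx => hg x (hA₀ hx), card_empty]
    exact Nat.zero_le _
  · calc #{x ∈ A | g x = t} ≤ #{x : ZMod p | x ≠ 0 ∧ g x = t} :=
          card_le_card fun x hx => by
            obtain ⟨hxA, hxt⟩ := mem_filter.mp hx
            exact mem_filter.mpr ⟨mem_univ x, hA₀ hxA, hxt⟩
      _ ≤ mu g := le_sup (f := fun t => #{x : ZMod p | x ≠ 0 ∧ g x = t})
          (mem_filter.mpr ⟨mem_univ t, ht⟩)

end PhamMojarrad

theorem pham_mojarrad_sum_general {α K : Type*} [Field K] [DecidableEq K] {p : ℕ} [CharP K p]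
    {g h : α → K} {A : Finset α} {B C : Finset K} {m : ℕ}
    (hg : ∀ x ∈ A, g x ≠ 0) (hm : ∀ t, #{x ∈ A | g x = t} ≤ m)
    (hA : A.Nonempty) (hB : B.Nonempty) (hC : C.Nonempty)
    (hAp : (#A : ℝ) ≤ (p : ℝ) ^ ((5 : ℝ) / 8)) (hBp : (#B : ℝ) ≤ (p : ℝ) ^ ((5 : ℝ) / 8))
    (hCp : (#C : ℝ) ≤ (p : ℝ) ^ ((5 : ℝ) / 8)) :
    min ((#A : ℝ) ^ ((1 : ℝ) / 5) * (#B : ℝ) ^ ((4 : ℝ) / 5) * (#C : ℝ) ^ ((1 : ℝ) / 5) /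
          (m : ℝ) ^ ((4 : ℝ) / 5))
        (min ((#B : ℝ) * (#C : ℝ) ^ ((1 : ℝ) / 2) / (m : ℝ))
          ((#B : ℝ) ^ ((2 : ℝ) / 3) * (#C : ℝ) ^ ((1 : ℝ) / 3) * (#A : ℝ) ^ ((1 : ℝ) / 3) /
            (m : ℝ) ^ ((2 : ℝ) / 3))) ≤
      1000 * max (#(image₂ (fun x y => g x * (h x + y)) A B) : ℝ) (#(B + C) : ℝ) := by
  set Y := image₂ (fun x y => g x * (h x + y)) A B
  set M : ℝ := max (#Y : ℝ) (#(B + C) : ℝ)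
  have ha : (0 : ℝ) < #A := mod_cast hA.card_pos
  have hc : (0 : ℝ) < #C := mod_cast hC.card_pos
  have hsM : (#(B + C) : ℝ) ≤ M := le_max_right _ _
  have hM : 1 ≤ M := hsM.trans' (mod_cast (hB.add hC).card_pos)
  have hm_pos : 1 ≤ m := by
    obtain ⟨x, hx⟩ := hA
    exact (card_pos.mpr ⟨x, (mem_filter (p := (g · = g x))).mpr ⟨hx, rfl⟩⟩).trans_le (hm (g x))
  refine PhamMojarrad.min_rpow_le ha.le (by positivity) hc.le (by positivity) (by positivity) ?_
  rcases le_total (#(B + C) * (#A * #C)) (p ^ 2) with hp | hp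
  · have hr : (Nat.sqrt (#(B + C) * (#A * #C)) : ℝ) ^ 2 ≤ #(B + C) * (#A * #C) :=
      mod_cast Nat.sqrt_le' _
    refine PhamMojarrad.monomial_le_or_le_or_le ha hc (by positivity)
      (hr.trans (by gcongr)) ?_
    exact PhamMojarrad.mul_sq_mul_le_of_sq_le ha hc hM (by positivity) hsM
      (le_max_left (#Y : ℝ) _) (by positivity)
      (mod_cast PhamMojarrad.sq_card_mul_card_mul_card_le hg hm hp)
  · left
    calc (#A : ℝ) * #B ^ 4 * #C ≤ #(B + C) ^ 5 :=
          PhamMojarrad.mul_pow_four_mul_le_pow_five ha (by positivity) hc (by positivity)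
            hAp hBp hCp (mod_cast hp)
      _ ≤ 1 * (1000 * M) ^ 5 := by rw [one_mul]; gcongr; linarith
      _ ≤ (m : ℝ) ^ 4 * (1000 * M) ^ 5 := by gcongr; exact one_le_pow₀ (mod_cast hm_pos)

theorem pham_mojarrad_sum :
    ∃ C > (0:ℝ),
      ∀ (p : ℕ) [Fact p.Prime], p ≠ 2 →
      ∀ g h : ZMod p → ZMod p,
      (∀ x : ZMod p, x ≠ 0 → g x ≠ 0) → (∀ x : ZMod p, x ≠ 0 → h x ≠ 0) →
      ∀ A B Cs : Finset (ZMod p),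
      A.Nonempty → B.Nonempty → Cs.Nonempty →
      (0:ZMod p) ∉ A → (0:ZMod p) ∉ B → (0:ZMod p) ∉ Cs →
      (A.card : ℝ) ≤ (p:ℝ) ^ ((5:ℝ)/8) →
      (B.card : ℝ) ≤ (p:ℝ) ^ ((5:ℝ)/8) →
      (Cs.card : ℝ) ≤ (p:ℝ) ^ ((5:ℝ)/8) →
      C * min ((A.card:ℝ) ^ ((1:ℝ)/5) * (B.card:ℝ) ^ ((4:ℝ)/5) * (Cs.card:ℝ) ^ ((1:ℝ)/5) /
                ((mu g : ℕ) : ℝ) ^ ((4:ℝ)/5))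
            (min ((B.card:ℝ) * (Cs.card:ℝ) ^ ((1:ℝ)/2) / ((mu g : ℕ) : ℝ))
              (min ((B.card:ℝ) * (A.card:ℝ) ^ ((1:ℝ)/2) / ((mu g : ℕ) : ℝ))
                ((B.card:ℝ) ^ ((2:ℝ)/3) * (Cs.card:ℝ) ^ ((1:ℝ)/3) * (A.card:ℝ) ^ ((1:ℝ)/3) /
                  ((mu g : ℕ) : ℝ) ^ ((2:ℝ)/3)))) ≤
        max ((Finset.image₂ (fun x y => g x * (h x + y)) A B).card : ℝ) (((B + Cs).card : ℝ)) := by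
  refine ⟨1 / 1000, by norm_num, fun p _ _ g h hg _ A B Cs hA hB hC hA₀ _ _ hAp hBp hCp => ?_⟩
  have hmin := pham_mojarrad_sum_general (h := h) (fun x hx => hg x (ne_of_mem_of_not_mem hx hA₀))
    (PhamMojarrad.card_filter_eq_le_mu hg hA₀) hA hB hC hAp hBp hCp
  rw [one_div, inv_mul_le_iff₀ (by norm_num)]
  exact (min_le_min_left _ (min_le_min_left _ (min_le_right _ _))).trans hmin
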